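/- Suppose the triple (V₁, V₂, V₃) of mutually disjoint vertex sets of a 3-uniform hypergraph is (ε,d)-regular with d ≥ 2ε, the sizes satisfy m = |V₁| ≥ |V₂| ≥ |V₃| and 5|V₁| ≤ 3(|V₂| + |V₃|), and 2ε²m > 7. Then there is an M-tiling of (V₁,V₂,V₃) (a family of pairwise vertex-disjoint copies of M, each edge used having one vertex in each class) which leaves at most 3εm vertices of V₁ ∪ V₂ ∪ V₃ uncovered. -/

import Mathlib

open Finset

/-- The number of edges of `H` with exactly one vertex in each of `A₁`, `A₂`, `A₃`. -/
def eCross {V : Type} [DecidableEq V] (H : Finset (Finset V)) (A1 A2 A3 : Finset V) : ℕ :=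
  (H.filter (fun e => (e ∩ A1).card = 1 ∧ (e ∩ A2).card = 1 ∧ (e ∩ A3).card = 1)).card

/-- The density of `H` with respect to the triple `(A₁, A₂, A₃)`. -/
noncomputable def triDensity {V : Type} [DecidableEq V] (H : Finset (Finset V))
    (A1 A2 A3 : Finset V) : ℝ :=
  (eCross H A1 A2 A3 : ℝ) / ((A1.card : ℝ) * (A2.card : ℝ) * (A3.card : ℝ))

/-- The triple `(V₁, V₂, V₃)` is `(ε, d)`-regular in `H`. -/
def RegTriple {V : Type} [DecidableEq V] (H : Finset (Finset V)) (ε d : ℝ)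
    (V1 V2 V3 : Finset V) : Prop :=
  ∀ A1 A2 A3 : Finset V, A1 ⊆ V1 → A2 ⊆ V2 → A3 ⊆ V3 →
    ε * V1.card ≤ A1.card → ε * V2.card ≤ A2.card → ε * V3.card ≤ A3.card →
    |triDensity H A1 A2 A3 - d| ≤ ε

/-- `g` describes a copy of the hypergraph `M` (vertices `{1,…,8}`, edges `{1,2,3}`,
`{3,4,5}`, `{4,5,6}`, `{6,7,8}`) inside the `3`-uniform hypergraph `H`. -/
def IsMCopy {V : Type} [DecidableEq V] (H : Finset (Finset V)) (g : Fin 8 → V) : Prop :=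
  Function.Injective g ∧
  ({g 0, g 1, g 2} : Finset V) ∈ H ∧ ({g 2, g 3, g 4} : Finset V) ∈ H ∧
  ({g 3, g 4, g 5} : Finset V) ∈ H ∧ ({g 5, g 6, g 7} : Finset V) ∈ H

/-- The four edges of the copy of `M` described by `g`. -/
def MCopyEdges {V : Type} [DecidableEq V] (g : Fin 8 → V) : Finset (Finset V) :=
  {({g 0, g 1, g 2} : Finset V), {g 2, g 3, g 4}, {g 3, g 4, g 5}, {g 5, g 6, g 7}}

/-!
Two vertices `x`, `x'` of one class form a copy of `M` with vertices of the other two classes as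
soon as their links share a pair `c` and contain pairs `a` and `b`, respectively, such that `a`,
`b`, `c` are disjoint. Such a copy is centred in the class of `x` and `x'`: it uses two vertices of
this class and three of each of the others. A König-type count shows that links of vertices of `A`
in `B × C` of total size more than `#B * #C + 2 * #A * max #B #C` contain two of this kind, so by
regularity every box whose sides are slightly above the regularity thresholds `ε * #Vᵢ` contains a
copy centred in a prescribed class.

Now copies are removed one by one, centred in the three classes as often as is needed to reach a
prescribed box of `T > 3 * ε * #V₁` vertices; the balance condition makes this possible. The
remaining box has to contain one further copy. This is clear unless rounding up the thresholds
spoils it, that is unless `3 * k` is `T + 1` or `T + 2` for `k = ⌈ε * #V₁⌉`. In the worst of these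
cases the removal stops one copy earlier, at a box of sides `k + 3`, `k + 2`, `k + 2` or three times
`k + 2`, which contains two disjoint copies: if what is left after the removal of one copy contains
none, then vertices of the removed copy have large links, which leave enough freedom to exchange it.
-/

section Cells

variable {α β : Type*}

/-- Two cells of a grid are *apart* if they share neither their row nor their column; pairwise
apart cells are matchings of the bipartite graph whose edges are the cells. -/
def Apart (a b : α × β) : Prop := a.1 ≠ b.1 ∧ a.2 ≠ b.2

lemma Apart.symm {a b : α × β} (h : Apart a b) : Apart b a := ⟨h.1.symm, h.2.symm⟩

lemma Apart.swap {a b : α × β} (h : Apart a b) : Apart a.swap b.swap := ⟨h.2, h.1⟩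

/-- Two sets of cells are *cross-linked* if they have a common cell `c` that extends, by a cell from
each set, to three pairwise apart cells. When the two sets are the links of two vertices, this is a
copy of `M` whose vertices of degree two, other than those of `c`, are the two vertices. -/
def CrossLinked (L L' : Finset (α × β)) : Prop :=
  ∃ c ∈ L, c ∈ L' ∧ ∃ a ∈ L, ∃ b ∈ L', Apart c a ∧ Apart c b ∧ Apart a b

lemma CrossLinked.mono {L₁ L₁' L₂ L₂' : Finset (α × β)} (h : CrossLinked L₁ L₁') (hL : L₁ ⊆ L₂)
    (hL' : L₁' ⊆ L₂') : CrossLinked L₂ L₂' := by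
  obtain ⟨c, hc, hc', a, ha, b, hb, hab⟩ := h
  exact ⟨c, hL hc, hL' hc', a, hL ha, b, hL' hb, hab⟩

lemma mem_pair_of_not_crossLinked {L L' : Finset (α × β)} {c a a' : α × β}
    (h : ¬ CrossLinked L L') (hc : c ∈ L) (hc' : c ∈ L') (ha : a ∈ L) (ha' : a' ∈ L)
    (hca : Apart c a) (hca' : Apart c a') (haa' : Apart a a') {b : α × β} (hb : b ∈ L')
    (hcb : Apart c b) : b = (a.1, a'.2) ∨ b = (a'.1, a.2) := by
  have hmeet : ∀ d ∈ L, Apart c d → ¬ Apart d b := fun d hd hcd hdb =>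
    h ⟨c, hc, hc', d, hd, b, hb, hcd, hcb, hdb⟩
  have h₁ := hmeet a ha hca
  have h₂ := hmeet a' ha' hca'
  simp only [Apart, Prod.ext_iff] at *
  grind

lemma exists_mem_inter_of_card_lt_sum {ι : Type*} {s : Finset ι} {f : ι → Finset α} {t : Finset α}
    (hf : ∀ i ∈ s, f i ⊆ t) (h : #t < ∑ i ∈ s, #(f i)) :
    ∃ i ∈ s, ∃ j ∈ s, i ≠ j ∧ ∃ c, c ∈ f i ∧ c ∈ f j := by
  classical
  by_contra! hcon
  have hdisj : ∀ i ∈ s, ∀ j ∈ s, i ≠ j → Disjoint (f i) (f j) := fun i hi j hj hij =>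
    disjoint_left.2 (hcon i hi j hj hij)
  rw [← card_biUnion hdisj] at h
  exact h.not_ge (card_le_card (biUnion_subset.2 hf))

variable {Y : Finset α} {Z : Finset β} {L : Finset (α × β)}

lemma exists_ne_lt_card_row [DecidableEq α] {n : ℕ} (hL : L ⊆ Y ×ˢ Z) (y₀ : α) (hn : n ≤ #Z)
    (h : #Z + n * #Y < #L + n) : ∃ y ∈ Y, y ≠ y₀ ∧ n < #{c ∈ L | c.1 = y} := by
  by_contra! hcon
  have hsum : #L = ∑ y ∈ Y, #{c ∈ L | c.1 = y} :=
    card_eq_sum_card_fiberwise fun c hc => (mem_product.1 (hL hc)).1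
  have hrest : ∑ y ∈ Y.erase y₀, #{c ∈ L | c.1 = y} ≤ #(Y.erase y₀) * n :=
    sum_le_card_nsmul _ _ _ fun y hy => hcon y (mem_of_mem_erase hy) (ne_of_mem_erase hy)
  by_cases hy₀ : y₀ ∈ Y
  · have hrow : #{c ∈ L | c.1 = y₀} ≤ #Z := card_le_card_of_injOn Prod.snd
      (fun c hc => (mem_product.1 (hL (mem_filter.1 hc).1)).2)
      (fun c hc c' hc' h => Prod.ext ((mem_filter.1 hc).2.trans (mem_filter.1 hc').2.symm) h)
    have hcard := card_erase_add_one hy₀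
    rw [← add_sum_erase _ _ hy₀] at hsum
    rw [← hcard] at h
    linarith
  · rw [erase_eq_of_notMem hy₀] at hrest
    linarith

lemma exists_mem_avoiding_lines (hL : L ⊆ Y ×ˢ Z) (R : Finset α) (S : Finset β)
    (h : #R * #Z + #Y * #S < #L) : ∃ c ∈ L, c.1 ∉ R ∧ c.2 ∉ S := by
  classical
  by_contra! hcon
  have hsub : L ⊆ R ×ˢ Z ∪ Y ×ˢ S := fun c hc => by
    have := mem_product.1 (hL hc)
    have := hcon c hc
    simp only [mem_union, mem_product]
    tauto
  have := (card_le_card hsub).trans (card_union_le _ _)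
  rw [card_product, card_product] at this
  omega

lemma exists_apart_pair {M : ℕ} (hY : #Y ≤ M) (hZ : #Z ≤ M) (hL : L ⊆ Y ×ˢ Z) (h : M < #L) :
    ∃ a ∈ L, ∃ b ∈ L, Apart a b := by
  classical
  obtain ⟨a, ha⟩ : L.Nonempty := card_pos.1 (by omega)
  obtain ⟨p, hp, hpa, -⟩ := exists_mem_avoiding_lines hL {a.1} ∅ (by simp; omega)
  obtain ⟨q, hq, -, hqa⟩ := exists_mem_avoiding_lines hL ∅ {a.2} (by simp; omega)
  rw [mem_singleton] at hpa hqa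
  by_contra! hcon
  have hap := hcon a ha p hp
  have haq := hcon a ha q hq
  have hpq := hcon p hp q hq
  simp only [Apart] at hap haq hpq
  grind

/-- The case of two lines of König's theorem. Starting from two apart cells `a` and `b`, the cells
missed by the rows, by the columns, and by one row and one column through `a` and `b` allow an
augmentation. -/
lemma exists_apart_triple {M : ℕ} (hY : #Y ≤ M) (hZ : #Z ≤ M) (hL : L ⊆ Y ×ˢ Z)
    (h : 2 * M < #L) :
    ∃ a ∈ L, ∃ b ∈ L, ∃ c ∈ L, Apart a b ∧ Apart a c ∧ Apart b c := by
  classical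
  obtain ⟨a, ha, b, hb, hab⟩ := exists_apart_pair hY hZ hL (by omega)
  by_contra! hcon
  wlog hp : ∃ p ∈ L, p.1 ≠ a.1 ∧ p.1 ≠ b.1 ∧ p.2 = a.2 generalizing a b
  · obtain ⟨p, hpL, hp₁, -⟩ := exists_mem_avoiding_lines hL {a.1, b.1} ∅ (by
      rw [card_pair hab.1, card_empty]; omega)
    simp only [mem_insert, mem_singleton, not_or] at hp₁
    refine this b hb a ha hab.symm ⟨p, hpL, hp₁.2, hp₁.1, ?_⟩
    by_contra hpb
    exact hcon a ha b hb p hpL hab ⟨Ne.symm hp₁.1, fun hpa => hp ⟨p, hpL, hp₁.1, hp₁.2, hpa.symm⟩⟩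
      ⟨Ne.symm hp₁.2, Ne.symm hpb⟩
  obtain ⟨p, hpL, hpa, hpb, hp₂⟩ := hp
  obtain ⟨q, hqL, -, hq₂⟩ := exists_mem_avoiding_lines hL ∅ {a.2, b.2} (by
    rw [card_pair hab.2, card_empty]; omega)
  simp only [mem_insert, mem_singleton, not_or] at hq₂
  have hq₁ : q.1 = b.1 := by
    have := hcon a ha b hb q hqL
    have := hcon p hpL q hqL b hb
    simp only [Apart] at *
    grind
  obtain ⟨r, hrL, hr₁, hr₂⟩ := exists_mem_avoiding_lines hL {b.1} {a.2} (by
    rw [card_singleton, card_singleton]; omega)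
  rw [mem_singleton] at hr₁ hr₂
  have hpqr := hcon p hpL q hqL r hrL
  have habr := hcon a ha b hb r hrL
  have hrpb := hcon r hrL p hpL b hb
  have haqr := hcon a ha q hqL r hrL
  clear hcon
  simp only [Apart] at *
  grind +splitImp

/-- The two lines through `c` have at most `2 * M - 1` cells, so `L` has to contain both of them as
well as `a` and `b`. -/
lemma mem_of_apart_imp_mem_pair {M : ℕ} (hY : #Y ≤ M) (hZ : #Z ≤ M) (hL : L ⊆ Y ×ˢ Z)
    (h : 2 * M < #L) {a b c : α × β} (hc : c ∈ L) (hab : ∀ d ∈ L, Apart c d → d = a ∨ d = b)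
    {d : α × β} (hd : d ∈ Y ×ˢ Z ∧ ¬ Apart c d ∨ d = a ∨ d = b) : d ∈ L := by
  classical
  have hcYZ := mem_product.1 (hL hc)
  have hsub : L ⊆ ({c.1} ×ˢ Z ∪ Y ×ˢ {c.2}) ∪ {a, b} := fun e he => by
    have := mem_product.1 (hL he)
    have := hab e he
    simp only [Apart, mem_union, mem_product, mem_singleton, mem_insert] at *
    tauto
  have hlines := card_union_add_card_inter ({c.1} ×ˢ Z) (Y ×ˢ {c.2})
  have hinter : 0 < #(({c.1} ×ˢ Z) ∩ (Y ×ˢ {c.2})) :=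
    card_pos.2 ⟨c, by simpa using hcYZ.symm⟩
  simp only [card_product, card_singleton, one_mul, mul_one] at hlines
  have hcard := card_union_le ({c.1} ×ˢ Z ∪ Y ×ˢ {c.2}) {a, b}
  have hpair : #{a, b} ≤ 2 := card_le_two
  rw [eq_of_subset_of_card_le hsub (by omega)]
  simp only [Apart, mem_union, mem_product, mem_singleton, mem_insert] at *
  grind

lemma crossLinked_of_apart_triple {M : ℕ} (hY : #Y ≤ M) (hZ : #Z ≤ M) {L' : Finset (α × β)}
    (hL : L ⊆ Y ×ˢ Z) (hL' : L' ⊆ Y ×ˢ Z) (h : 2 * M < #L) (h' : 2 * M < #L') {c a a' : α × β}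
    (hc : c ∈ L) (hc' : c ∈ L') (ha : a ∈ L) (ha' : a' ∈ L) (hca : Apart c a) (hca' : Apart c a')
    (haa' : Apart a a') : CrossLinked L L' := by
  by_contra hcon
  have hpair' : ∀ b ∈ L', Apart c b → b = (a.1, a'.2) ∨ b = (a'.1, a.2) := fun b hb =>
    mem_pair_of_not_crossLinked hcon hc hc' ha ha' hca hca' haa' hb
  have hmem' {d} := mem_of_apart_imp_mem_pair hY hZ hL' h' hc' hpair' (d := d)
  have hcon' : ¬ CrossLinked L' L := fun ⟨c, hc, hc', a, ha, b, hb, hca, hcb, hab⟩ =>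
    hcon ⟨c, hc', hc, b, hb, a, ha, hcb, hca, hab.symm⟩
  have hpair : ∀ d ∈ L, Apart c d → d = a ∨ d = a' := fun d hd hcd =>
    mem_pair_of_not_crossLinked hcon' hc' hc (hmem' (.inr (.inl rfl))) (hmem' (.inr (.inr rfl)))
      ⟨hca.1, hca'.2⟩ ⟨hca'.1, hca.2⟩ ⟨haa'.1, haa'.2.symm⟩ hd hcd
  have hcYZ := mem_product.1 (hL hc)
  have haYZ := mem_product.1 (hL ha)
  have hrow : (c.1, a.2) ∈ Y ×ˢ Z ∧ ¬ Apart c (c.1, a.2) :=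
    ⟨mem_product.2 ⟨hcYZ.1, haYZ.2⟩, fun h => h.1 rfl⟩
  have hcol : (a.1, c.2) ∈ Y ×ˢ Z ∧ ¬ Apart c (a.1, c.2) :=
    ⟨mem_product.2 ⟨haYZ.1, hcYZ.2⟩, fun h => h.2 rfl⟩
  exact hcon ⟨(c.1, a.2), mem_of_apart_imp_mem_pair hY hZ hL h hc hpair (.inl hrow),
    hmem' (.inl hrow), a', ha', (a.1, c.2), hmem' (.inl hcol), ⟨hca'.1, haa'.2⟩,
    ⟨hca.1, hca.2.symm⟩, ⟨haa'.1.symm, hca'.2.symm⟩⟩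

/-- Apart from at most `2 * M` cells each, the sets with more than `2 * M` cells are disjoint: three
pairwise apart cells that one of them shares with others would make it cross-linked. -/
lemma exists_crossLinked_of_lt_sum {ι : Type*} {M : ℕ} (hY : #Y ≤ M) (hZ : #Z ≤ M)
    {s : Finset ι} {f : ι → Finset (α × β)} (hf : ∀ i ∈ s, f i ⊆ Y ×ˢ Z)
    (h : #Y * #Z + 2 * #s * M < ∑ i ∈ s, #(f i)) :
    ∃ i ∈ s, ∃ j ∈ s, i ≠ j ∧ CrossLinked (f i) (f j) := by
  classical
  by_contra! hcon
  let big : Finset ι := {i ∈ s | 2 * M < #(f i)}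
  let shared (i : ι) : Finset (α × β) := {c ∈ f i | ∃ j ∈ big, i ≠ j ∧ c ∈ f j}
  have hbig {i} (hi : i ∈ big) : i ∈ s ∧ 2 * M < #(f i) := mem_filter.1 hi
  have hshared : ∀ i ∈ big, #(shared i) ≤ 2 * M := fun i hi => by
    by_contra! hlt
    obtain ⟨c, hc, a, ha, a', ha', hca, hca', haa'⟩ :=
      exists_apart_triple hY hZ ((filter_subset _ _).trans (hf i (hbig hi).1)) hlt
    obtain ⟨hci, j, hj, hij, hcj⟩ := mem_filter.1 hc
    exact hcon i (hbig hi).1 j (hbig hj).1 hij <| crossLinked_of_apart_triple hY hZ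
      (hf i (hbig hi).1) (hf j (hbig hj).1) (hbig hi).2 (hbig hj).2 hci hcj (mem_filter.1 ha).1
      (mem_filter.1 ha').1 hca hca' haa'
  have hdisj : ∑ i ∈ big, #(f i \ shared i) ≤ #(Y ×ˢ Z) := by
    by_contra! hlt
    obtain ⟨i, -, j, hj, hij, c, hci, hcj⟩ := exists_mem_inter_of_card_lt_sum
      (fun i hi => sdiff_subset.trans (hf i (hbig hi).1)) hlt
    rw [mem_sdiff] at hci hcj
    exact hci.2 (mem_filter.2 ⟨hci.1, j, hj, hij, hcj.1⟩)
  have hle : ∀ i ∈ s, #(f i) ≤ (if i ∈ big then #(f i \ shared i) else 0) + 2 * M := fun i hi => by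
    split_ifs with hib
    · have hsub : shared i ⊆ f i := filter_subset _ _
      have := card_sdiff_add_card_eq_card hsub
      have := hshared i hib
      omega
    · simpa [big, hi] using hib
  have hsum : ∑ i ∈ s, #(f i) ≤ ∑ i ∈ big, #(f i \ shared i) + #s * (2 * M) := by
    refine (sum_le_sum hle).trans_eq ?_
    rw [sum_add_distrib, ← sum_filter, filter_mem_eq_inter, inter_eq_right.2 (filter_subset _ _),
      sum_const, smul_eq_mul]
  rw [card_product] at hdisj
  linarith

end Cells

section Links

variable {V : Type*} [DecidableEq V] {H : Finset (Finset V)} {A B C A' B' C' : Finset V}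

/-- The link of the vertex `x` in `B × C`: the pairs that complete `x` to an edge. -/
def link (H : Finset (Finset V)) (B C : Finset V) (x : V) : Finset (V × V) :=
  {p ∈ B ×ˢ C | {x, p.1, p.2} ∈ H}

lemma mem_link {p : V × V} {x : V} :
    p ∈ link H B C x ↔ p.1 ∈ B ∧ p.2 ∈ C ∧ {x, p.1, p.2} ∈ H := by
  simp [link, and_assoc]

lemma link_subset (H : Finset (Finset V)) (B C : Finset V) (x : V) : link H B C x ⊆ B ×ˢ C :=
  filter_subset _ _

lemma link_mono (hB : B ⊆ B') (hC : C ⊆ C') (x : V) : link H B C x ⊆ link H B' C' x :=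
  filter_subset_filter _ (product_subset_product hB hC)

lemma swap_mem_link {p : V × V} {x : V} : p.swap ∈ link H C B x ↔ p ∈ link H B C x := by
  simp [mem_link, pair_comm, and_left_comm]

lemma card_link_add_le (hB : B ⊆ B') (hC : C ⊆ C') (x : V) :
    #(link H B' C' x) + #B * #C ≤ #(link H B C x) + #B' * #C' := by
  have hsub : link H B' C' x ⊆ link H B C x ∪ (B' ×ˢ C') \ (B ×ˢ C) := fun p hp => by
    have hp' := mem_link.1 hp
    simp only [mem_union, mem_sdiff, mem_product, mem_link]
    tauto
  have hcard := (card_le_card hsub).trans (card_union_le _ _)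
  have hsdiff := card_sdiff_add_card_eq_card (product_subset_product hB hC)
  rw [card_product, card_product] at hsdiff
  omega

/-- The number of triples of `A × B × C` that span an edge. For disjoint `A`, `B`, `C` this is the
number of edges of `H` with one vertex in each of them. -/
def tripleCount (H : Finset (Finset V)) (A B C : Finset V) : ℕ := ∑ x ∈ A, #(link H B C x)

lemma tripleCount_eq_sum :
    tripleCount H A B C = ∑ x ∈ A, ∑ y ∈ B, ∑ z ∈ C, if {x, y, z} ∈ H then 1 else 0 :=
  sum_congr rfl fun x _ => by rw [link, card_filter, sum_product]

lemma tripleCount_swap₁₂ : tripleCount H A B C = tripleCount H B A C := by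
  rw [tripleCount_eq_sum, tripleCount_eq_sum, sum_comm]
  simp only [insert_comm]

lemma tripleCount_swap₂₃ : tripleCount H A B C = tripleCount H A C B := by
  rw [tripleCount_eq_sum, tripleCount_eq_sum]
  refine sum_congr rfl fun x _ => ?_
  rw [sum_comm]
  simp only [pair_comm]

lemma tripleCount_insert {x : V} (hx : x ∉ A) :
    tripleCount H (insert x A) B C = #(link H B C x) + tripleCount H A B C :=
  sum_insert hx

lemma tripleCount_insert_insert_le {y z : V} (hy : y ∉ B) (hz : z ∉ C) :
    tripleCount H A (insert y B) (insert z C) ≤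
      tripleCount H A B C + #(link H A C y) + #(link H A B z) + #A := by
  have hlink := card_link_add_le (H := H) (subset_refl A) (subset_insert z C) y
  have hz' : tripleCount H A B (insert z C) = #(link H A B z) + tripleCount H A B C := by
    rw [tripleCount_swap₂₃, tripleCount_swap₁₂, tripleCount_insert hz, tripleCount_swap₁₂,
      tripleCount_swap₂₃]
  rw [card_insert_of_notMem hz] at hlink
  rw [tripleCount_swap₁₂, tripleCount_insert hy, tripleCount_swap₁₂, hz']
  linarith

/-- There are two vertices of `A` whose links in `B × C` are cross-linked, i.e. a copy of `M` with
two vertices in `A` and three in each of `B` and `C`, whose two middle edges meet in `B` and `C`. -/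
def HasCentredCopy (H : Finset (Finset V)) (A B C : Finset V) : Prop :=
  ∃ x ∈ A, ∃ x' ∈ A, x ≠ x' ∧ CrossLinked (link H B C x) (link H B C x')

lemma HasCentredCopy.mono (h : HasCentredCopy H A B C) (hA : A ⊆ A') (hB : B ⊆ B') (hC : C ⊆ C') :
    HasCentredCopy H A' B' C' := by
  obtain ⟨x, hx, x', hx', hne, h⟩ := h
  exact ⟨x, hA hx, x', hA hx', hne, h.mono (link_mono hB hC x) (link_mono hB hC x')⟩

lemma HasCentredCopy.swap (h : HasCentredCopy H A B C) : HasCentredCopy H A C B := by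
  obtain ⟨x, hx, x', hx', hne, c, hc, hc', a, ha, b, hb, hca, hcb, hab⟩ := h
  exact ⟨x, hx, x', hx', hne, c.swap, swap_mem_link.2 hc, swap_mem_link.2 hc', a.swap,
    swap_mem_link.2 ha, b.swap, swap_mem_link.2 hb, hca.swap, hcb.swap, hab.swap⟩

lemma HasCentredCopy.exists_card_eq (h : HasCentredCopy H A B C) :
    ∃ X ⊆ A, ∃ Y ⊆ B, ∃ Z ⊆ C, #X = 2 ∧ #Y = 3 ∧ #Z = 3 ∧ HasCentredCopy H X Y Z := by
  obtain ⟨x, hx, x', hx', hne, c, hc, hc', a, ha, b, hb, hca, hcb, hab⟩ := h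
  obtain ⟨hc₁, hc₂, hcx⟩ := mem_link.1 hc
  obtain ⟨ha₁, ha₂, hax⟩ := mem_link.1 ha
  obtain ⟨hb₁, hb₂, hbx'⟩ := mem_link.1 hb
  have hcx' := (mem_link.1 hc').2.2
  refine ⟨{x, x'}, by simp [insert_subset_iff, *], {c.1, a.1, b.1}, by simp [insert_subset_iff, *],
    {c.2, a.2, b.2}, by simp [insert_subset_iff, *], card_pair hne,
    card_eq_three.2 ⟨_, _, _, hca.1, hcb.1, hab.1, rfl⟩,
    card_eq_three.2 ⟨_, _, _, hca.2, hcb.2, hab.2, rfl⟩, x, by simp, x', by simp, hne, c, ?_, ?_,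
    a, ?_, b, ?_, hca, hcb, hab⟩ <;> simp [mem_link, *]

lemma hasCentredCopy_of_lt_card_link {x x' : V} (hx : x ∈ A) (hx' : x' ∈ A) (hne : x ≠ x')
    (h : #B + #C < #(link H B C x)) (h' : 2 * #B + 2 * #C < #(link H B C x'))
    (hadd : #B * #C < #(link H B C x) + #(link H B C x')) : HasCentredCopy H A B C := by
  obtain ⟨c, hcc'⟩ := inter_nonempty_of_card_lt_card_add_card (link_subset H B C x)
    (link_subset H B C x') (by rwa [card_product])
  obtain ⟨hc, hc'⟩ := mem_inter.1 hcc'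
  obtain ⟨a, ha, ha₁, ha₂⟩ := exists_mem_avoiding_lines (link_subset H B C x) {c.1} {c.2} (by
    rw [card_singleton, card_singleton]; omega)
  obtain ⟨b, hb, hb₁, hb₂⟩ := exists_mem_avoiding_lines (link_subset H B C x') {c.1, a.1}
    {c.2, a.2} (by
      have := card_le_two (a := c.1) (b := a.1)
      have := card_le_two (a := c.2) (b := a.2)
      nlinarith)
  simp only [mem_insert, mem_singleton, not_or] at ha₁ ha₂ hb₁ hb₂
  exact ⟨x, hx, x', hx', hne, c, hc, hc', a, ha, b, hb, ⟨Ne.symm ha₁, Ne.symm ha₂⟩,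
    ⟨Ne.symm hb₁.1, Ne.symm hb₂.1⟩, ⟨Ne.symm hb₁.2, Ne.symm hb₂.2⟩⟩

lemma hasCentredCopy_of_lt_tripleCount {M : ℕ} (hB : #B ≤ M) (hC : #C ≤ M)
    (h : #B * #C + 2 * #A * M < tripleCount H A B C) : HasCentredCopy H A B C := by
  obtain ⟨x, hx, x', hx', hne, hxx'⟩ :=
    exists_crossLinked_of_lt_sum hB hC (fun x _ => link_subset H B C x) h
  exact ⟨x, hx, x', hx', hne, hxx'⟩

/-- There is a copy of `M` in the triple `(A, B, C)`, with its two vertices in one of the three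
classes. -/
def HasCopy (H : Finset (Finset V)) (A B C : Finset V) : Prop :=
  HasCentredCopy H A B C ∨ HasCentredCopy H B A C ∨ HasCentredCopy H C A B

lemma HasCopy.swap₁₂ (h : HasCopy H A B C) : HasCopy H B A C := by
  rcases h with h | h | h
  · exact .inr (.inl h)
  · exact .inl h
  · exact .inr (.inr h.swap)

lemma HasCopy.swap₂₃ (h : HasCopy H A B C) : HasCopy H A C B := by
  rcases h with h | h | h
  · exact .inl h.swap
  · exact .inr (.inr h)
  · exact .inr (.inl h)

/-- There are `q` pairwise disjoint copies of `M` in the triple `(A, B, C)`. -/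
inductive HasTiling (H : Finset (Finset V)) : ℕ → Finset V → Finset V → Finset V → Prop
  | zero (A B C : Finset V) : HasTiling H 0 A B C
  | succ {q : ℕ} {A B C X Y Z : Finset V} (hX : X ⊆ A) (hY : Y ⊆ B) (hZ : Z ⊆ C)
      (hcopy : HasCopy H X Y Z) (hrest : HasTiling H q (A \ X) (B \ Y) (C \ Z)) :
      HasTiling H (q + 1) A B C

lemma HasTiling.mono {q : ℕ} (h : HasTiling H q A B C) (hA : A ⊆ A') (hB : B ⊆ B') (hC : C ⊆ C') :
    HasTiling H q A' B' C' := by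
  induction h generalizing A' B' C' with
  | zero => exact .zero _ _ _
  | succ hX hY hZ hcopy _ ih =>
    exact .succ (hX.trans hA) (hY.trans hB) (hZ.trans hC) hcopy
      (ih (sdiff_subset_sdiff hA subset_rfl) (sdiff_subset_sdiff hB subset_rfl)
        (sdiff_subset_sdiff hC subset_rfl))

lemma HasTiling.swap₁₂ {q : ℕ} (h : HasTiling H q A B C) : HasTiling H q B A C := by
  induction h with
  | zero => exact .zero _ _ _
  | succ hX hY hZ hcopy _ ih => exact .succ hY hX hZ hcopy.swap₁₂ ih

lemma HasTiling.swap₂₃ {q : ℕ} (h : HasTiling H q A B C) : HasTiling H q A C B := by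
  induction h with
  | zero => exact .zero _ _ _
  | succ hX hY hZ hcopy _ ih => exact .succ hX hZ hY hcopy.swap₂₃ ih

lemma HasCopy.hasTiling_one (h : HasCopy H A B C) : HasTiling H 1 A B C :=
  .succ subset_rfl subset_rfl subset_rfl h (.zero _ _ _)

end Links

section Exchange

/-- The sets of cells `L` and `L'` are cross-linked through the common cell `c`, with `a ∈ L` and
any one of at least five cells of `L'` in the row `p`. -/
structure FlexiblyCrossLinked {α β : Type*} [DecidableEq α] (L L' : Finset (α × β)) (c a : α × β)
    (p : α) : Prop where
  left_mem : c ∈ L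
  right_mem : c ∈ L'
  mem : a ∈ L
  apart : Apart c a
  row_ne_fst : p ≠ c.1
  row_ne_fst' : p ≠ a.1
  five_le_card_row : 5 ≤ #{e ∈ L' | e.1 = p}

lemma FlexiblyCrossLinked.mono {α β : Type*} [DecidableEq α] {L₁ L₁' L₂ L₂' : Finset (α × β)}
    {c a : α × β} {p : α} (h : FlexiblyCrossLinked L₁ L₁' c a p) (hL : L₁ ⊆ L₂) (hL' : L₁' ⊆ L₂') :
    FlexiblyCrossLinked L₂ L₂' c a p :=
  ⟨hL h.left_mem, hL' h.right_mem, hL h.mem, h.apart, h.row_ne_fst, h.row_ne_fst',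
    h.five_le_card_row.trans (card_le_card (filter_subset_filter _ hL'))⟩

lemma exists_flexiblyCrossLinked {α β : Type*} [DecidableEq α] {Y Y' : Finset α}
    {Z Z' : Finset β} {L L' L₀ : Finset (α × β)} {c : α × β} (hc : c ∈ L) (hc' : c ∈ L')
    (hL : L ⊆ Y ×ˢ Z) (h : 2 * #Z + #Y < #L) (hL₀ : L₀ ⊆ L') (hL₀' : L₀ ⊆ Y' ×ˢ Z')
    (hZ' : 4 ≤ #Z') (h₀ : #Z' + 4 * #Y' < #L₀ + 4) :
    ∃ a p, FlexiblyCrossLinked L L' c a p := by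
  classical
  obtain ⟨p, -, hpc, hp⟩ := exists_ne_lt_card_row hL₀' c.1 hZ' h₀
  obtain ⟨a, ha, ha₁, ha₂⟩ := exists_mem_avoiding_lines hL {c.1, p} {c.2} (by
    rw [card_pair hpc.symm, card_singleton]; omega)
  simp only [mem_insert, mem_singleton, not_or] at ha₁ ha₂
  exact ⟨a, p, hc, hc', ha, ⟨Ne.symm ha₁.1, Ne.symm ha₂⟩, hpc, Ne.symm ha₁.2,
    hp.trans_le (card_le_card (filter_subset_filter _ hL₀))⟩

variable {V : Type*} [DecidableEq V] {H : Finset (Finset V)} {A B C U₁ U₂ U₃ : Finset V} {k : ℕ}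
  {e₀ : ℝ}

/-- A copy of `M` centred in `C` has only two vertices in `C`, so together with the columns of `c`
and `a` it blocks at most four of the five cells in the row `p`. -/
lemma FlexiblyCrossLinked.hasTiling_two {w w' : V} {c a : V × V} {p : V}
    (h : FlexiblyCrossLinked (link H B C w) (link H B C w') c a p) (hw : w ∈ A) (hw' : w' ∈ A)
    (hne : w ≠ w')
    (hcopy : HasCentredCopy H (C \ {c.2, a.2}) (A \ {w, w'}) (B \ {c.1, a.1, p})) :
    HasTiling H 2 A B C := by
  obtain ⟨Z, hZ, X, hX, Y, hY, hZcard, -, -, hcopy⟩ := hcopy.exists_card_eq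
  obtain ⟨e, he⟩ : ({e ∈ link H B C w' | e.1 = p}.image Prod.snd \ ({c.2, a.2} ∪ Z)).Nonempty := by
    have hinj : #({e ∈ link H B C w' | e.1 = p}.image Prod.snd) = #{e ∈ link H B C w' | e.1 = p} :=
      card_image_of_injOn fun e he e' he' h =>
        Prod.ext ((mem_filter.1 he).2.trans (mem_filter.1 he').2.symm) h
    have hblocked := card_union_le {c.2, a.2} Z
    have hpair : #{c.2, a.2} ≤ 2 := card_le_two
    have hsdiff := le_card_sdiff ({c.2, a.2} ∪ Z) ({e ∈ link H B C w' | e.1 = p}.image Prod.snd)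
    have := h.five_le_card_row
    exact card_pos.1 (by omega)
  obtain ⟨hc₁, hc₂, hcw⟩ := mem_link.1 h.left_mem
  have hcw' := (mem_link.1 h.right_mem).2.2
  obtain ⟨ha₁, ha₂, haw⟩ := mem_link.1 h.mem
  simp only [mem_sdiff, mem_image, mem_filter, mem_link, mem_union, mem_insert, mem_singleton,
    not_or, Prod.exists, exists_eq_right] at he
  obtain ⟨⟨hp, he, hew'⟩, ⟨hec, hea⟩, heZ⟩ := he
  simp only [subset_sdiff, disjoint_insert_right, disjoint_singleton_right] at hX hY hZ
  refine .succ hX.1 hY.1 hZ.1 (.inr (.inr hcopy)) (HasCopy.hasTiling_one (.inl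
    ⟨w, ?_, w', ?_, hne, c, ?_, ?_, a, ?_, (p, e), ?_, h.apart,
      ⟨h.row_ne_fst.symm, Ne.symm hec⟩, ⟨h.row_ne_fst'.symm, Ne.symm hea⟩⟩))
  all_goals simp [mem_link, *]

/-- All subsets of `U₁`, `U₂`, `U₃` of size `k` span at least `e₀` triples. -/
def DenseBoxes (H : Finset (Finset V)) (k : ℕ) (e₀ : ℝ) (U₁ U₂ U₃ : Finset V) : Prop :=
  ∀ A ⊆ U₁, ∀ B ⊆ U₂, ∀ C ⊆ U₃, #A = k → #B = k → #C = k → e₀ ≤ (tripleCount H A B C : ℝ)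

lemma DenseBoxes.mono (h : DenseBoxes H k e₀ U₁ U₂ U₃) (hA : A ⊆ U₁) (hB : B ⊆ U₂)
    (hC : C ⊆ U₃) : DenseBoxes H k e₀ A B C :=
  fun A' hA' B' hB' C' hC' => h A' (hA'.trans hA) B' (hB'.trans hB) C' (hC'.trans hC)

lemma DenseBoxes.swap₁₂ (h : DenseBoxes H k e₀ U₁ U₂ U₃) : DenseBoxes H k e₀ U₂ U₁ U₃ :=
  fun A hA B hB C hC cA cB cC => tripleCount_swap₁₂ (H := H) ▸ h B hB A hA C hC cB cA cC

lemma DenseBoxes.swap₂₃ (h : DenseBoxes H k e₀ U₁ U₂ U₃) : DenseBoxes H k e₀ U₁ U₃ U₂ :=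
  fun A hA B hB C hC cA cB cC => tripleCount_swap₂₃ (H := H) ▸ h A hA C hC B hB cA cC cB

lemma DenseBoxes.hasCentredCopy (h : DenseBoxes H k e₀ U₁ U₂ U₃) (he₀ : 3 * (k : ℝ) ^ 2 < e₀)
    (hA : A ⊆ U₁) (hB : B ⊆ U₂) (hC : C ⊆ U₃) (cA : k ≤ #A) (cB : k ≤ #B) (cC : k ≤ #C) :
    HasCentredCopy H A B C := by
  obtain ⟨A', hA', cA'⟩ := exists_subset_card_eq cA
  obtain ⟨B', hB', cB'⟩ := exists_subset_card_eq cB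
  obtain ⟨C', hC', cC'⟩ := exists_subset_card_eq cC
  refine (hasCentredCopy_of_lt_tripleCount cB'.le cC'.le ?_).mono hA' hB' hC'
  have := h A' (hA'.trans hA) B' (hB'.trans hB) C' (hC'.trans hC) cA' cB' cC'
  rw [cA', cB', cC']
  have : (k * k + 2 * k * k : ℝ) < tripleCount H A' B' C' := by linarith
  exact_mod_cast this

lemma DenseBoxes.le_tripleCount_add_card_link (h : DenseBoxes H k e₀ U₁ U₂ U₃) {x : V}
    (hx : x ∈ U₁ \ A) (hA : A ⊆ U₁) (hB : B ⊆ U₂) (hC : C ⊆ U₃) (cA : #A + 1 = k) (cB : #B = k)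
    (cC : #C = k) : e₀ ≤ (tripleCount H A B C : ℝ) + #(link H B C x) := by
  rw [mem_sdiff] at hx
  have := h (insert x A) (insert_subset hx.1 hA) B hB C hC (by rw [card_insert_of_notMem hx.2, cA])
    cB cC
  rw [tripleCount_insert hx.2] at this
  push_cast at this
  linarith

lemma tripleCount_le_of_not_hasCentredCopy {M : ℕ} (h : ¬ HasCentredCopy H A B C) (hB : #B ≤ M)
    (hC : #C ≤ M) : (tripleCount H A B C : ℝ) ≤ #B * #C + 2 * #A * M := by
  have := mt (hasCentredCopy_of_lt_tripleCount hB hC) h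
  exact_mod_cast not_lt.1 this

lemma DenseBoxes.le_card_link_of_not_hasCentredCopy (h : DenseBoxes H k e₀ U₁ U₂ U₃)
    (hcopy : ¬ HasCentredCopy H A B C) {x : V} (hx : x ∈ U₁ \ A) (hA : A ⊆ U₁) (hB : B ⊆ U₂)
    (hC : C ⊆ U₃) (cA : #A + 1 = k) (cB : #B = k) (cC : #C = k) :
    e₀ - (3 * k ^ 2 - 2 * k) ≤ #(link H B C x) := by
  have hle := h.le_tripleCount_add_card_link hx hA hB hC cA cB cC
  have hcount := tripleCount_le_of_not_hasCentredCopy hcopy cB.le cC.le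
  rw [cB, cC, show (#A : ℝ) = k - 1 by rw [← cA]; push_cast; ring] at hcount
  linarith

/-- A copy of `M` centred in `C` is removed from the triple. If the rest has no copy centred in `A`,
then the three vertices of `A` in the removed copy have large links in the rest. -/
lemma DenseBoxes.hasTiling_two_of_card_add_three (h : DenseBoxes H k e₀ A B C) (hk : 6 ≤ k)
    (he₀ : 7 / 2 * (k : ℝ) ^ 2 + 7 / 6 * k < e₀) (cA : #A = k + 2) (cB : #B = k + 3)
    (cC : #C = k + 2) : HasTiling H 2 A B C := by
  have hk' : (6 : ℝ) ≤ k := by exact_mod_cast hk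
  have he₀' : 3 * (k : ℝ) ^ 2 < e₀ := by nlinarith
  have hC := h.swap₂₃.swap₁₂
  obtain ⟨Z, hZ, X, hX, Y, hY, cZ, cX, cY, hcopy⟩ := (hC.hasCentredCopy he₀' subset_rfl subset_rfl
    subset_rfl (by omega) (by omega) (by omega)).exists_card_eq
  by_cases hrest : HasCentredCopy H (A \ X) (B \ Y) (C \ Z)
  · exact .succ hX hY hZ (.inr (.inr hcopy)) (HasCopy.hasTiling_one (.inl hrest))
  have cA' : #(A \ X) + 1 = k := by rw [card_sdiff_of_subset hX]; omega
  have cB' : #(B \ Y) = k := by rw [card_sdiff_of_subset hY]; omega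
  have cC' : #(C \ Z) = k := by rw [card_sdiff_of_subset hZ]; omega
  have hlink : ∀ w ∈ X, e₀ - (3 * k ^ 2 - 2 * k) ≤ #(link H (B \ Y) (C \ Z) w) := fun w hw =>
    h.le_card_link_of_not_hasCentredCopy hrest ((Finset.sdiff_sdiff_eq_self hX).ge hw) sdiff_subset
      sdiff_subset sdiff_subset cA' cB' cC'
  obtain ⟨w, hw, w', hw', hne, c, hc, hc'⟩ := exists_mem_inter_of_card_lt_sum
    (fun w (_ : w ∈ X) => link_subset H (B \ Y) (C \ Z) w) (by
      have := sum_le_sum hlink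
      rw [sum_const, cX, nsmul_eq_mul] at this
      rw [card_product, cB', cC', ← Nat.cast_lt (α := ℝ)]
      push_cast at this ⊢
      nlinarith)
  have hlarge : ∀ w ∈ X, 5 * k < #(link H (B \ Y) (C \ Z) w) := fun w hw => by
    have : (5 * k : ℝ) < #(link H (B \ Y) (C \ Z) w) := by nlinarith [hlink w hw]
    exact_mod_cast this
  obtain ⟨a, p, hflex⟩ := exists_flexiblyCrossLinked hc hc' (link_subset H (B \ Y) (C \ Z) w)
    (by linarith [hlarge w hw]) subset_rfl (link_subset H (B \ Y) (C \ Z) w') (by omega)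
    (by linarith [hlarge w' hw'])
  refine (hflex.mono (link_mono sdiff_subset sdiff_subset w)
    (link_mono sdiff_subset sdiff_subset w')).hasTiling_two (hX hw) (hX hw') hne
    (hC.hasCentredCopy he₀' sdiff_subset sdiff_subset sdiff_subset ?_ ?_ ?_)
  · have := le_card_sdiff {c.2, a.2} C
    have : #{c.2, a.2} ≤ 2 := card_le_two
    omega
  · have := le_card_sdiff {w, w'} A
    have : #{w, w'} ≤ 2 := card_le_two
    omega
  · have := le_card_sdiff {c.1, a.1, p} B
    have : #{c.1, a.1, p} ≤ 3 := card_le_three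
    omega

lemma DenseBoxes.hasTiling_two_of_le_card_link (h : DenseBoxes H k e₀ A B C) (hk : 6 ≤ k)
    (he₀ : 7 / 2 * (k : ℝ) ^ 2 + 7 / 3 * k + 14 / 9 < e₀) (cA : #A = k) (cB : #B = k + 2)
    (cC : #C = k) {u v : V} (hu : u ∈ B) (hv : v ∈ B) (hne : u ≠ v)
    (hlu : e₀ - (3 * k ^ 2 - k) ≤ #(link H A C u)) (hlv : e₀ - (3 * k ^ 2 - k) ≤ #(link H A C v)) :
    HasTiling H 2 A B C := by
  have hk' : (6 : ℝ) ≤ k := by exact_mod_cast hk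
  have cB' : #(B \ {u, v}) = k := by
    rw [card_sdiff_of_subset (by simp [insert_subset_iff, *]), card_pair hne, cB]; rfl
  obtain ⟨X, hX, Y, hY, Z, hZ, cX, -, cZ, hcopy⟩ := (h.hasCentredCopy (by nlinarith) subset_rfl
    sdiff_subset subset_rfl cA.ge cB'.ge cC.ge).exists_card_eq
  rw [subset_sdiff, disjoint_insert_right, disjoint_singleton_right] at hY
  have cAX : #(A \ X) + 2 = k := by rw [card_sdiff_of_subset hX]; omega
  have cCZ : #(C \ Z) + 3 = k := by rw [card_sdiff_of_subset hZ]; omega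
  have hAX : (#(A \ X) : ℝ) = k - 2 := by rw [← cAX]; push_cast; ring
  have hCZ : (#(C \ Z) : ℝ) = k - 3 := by rw [← cCZ]; push_cast; ring
  have hrest : ∀ r, e₀ - (3 * k ^ 2 - k) ≤ #(link H A C r) →
      k ^ 2 / 2 - 5 / 3 * k + 15 / 2 < (#(link H (A \ X) (C \ Z) r) : ℝ) := fun r hr => by
    have hle : (#(link H A C r) + #(A \ X) * #(C \ Z) : ℝ) ≤
        #(link H (A \ X) (C \ Z) r) + #A * #C := by
      exact_mod_cast card_link_add_le sdiff_subset sdiff_subset r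
    rw [hAX, hCZ, cA, cC] at hle
    linarith
  have hlarge : ∀ r, e₀ - (3 * k ^ 2 - k) ≤ #(link H A C r) →
      2 * #(A \ X) + 2 * #(C \ Z) < #(link H (A \ X) (C \ Z) r) := fun r hr => by
    rify
    nlinarith [hrest r hr, sq_nonneg ((k : ℝ) - 6)]
  have hadd : #(A \ X) * #(C \ Z) <
      #(link H (A \ X) (C \ Z) u) + #(link H (A \ X) (C \ Z) v) := by
    rify
    nlinarith [hrest u hlu, hrest v hlv]
  exact .succ hX hY.1 hZ (.inl hcopy) (HasCopy.hasTiling_one (.inr (.inl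
    (hasCentredCopy_of_lt_card_link (mem_sdiff.2 ⟨hu, hY.2.1⟩) (mem_sdiff.2 ⟨hv, hY.2.2⟩) hne
      (by linarith [hlarge u hlu]) (hlarge v hlv) hadd))))

/-- If one of the vertices of `B` used by the first copy has a small link in the rest of `A × C`,
then the other vertices form a dense triple, which has a copy centred in `C`. Otherwise two of them
have large links in `A × C`, which stay cross-linked after the removal of a copy centred in `A`. -/
lemma FlexiblyCrossLinked.hasTiling_two_of_denseBoxes {w w' : V} {c a : V × V} {p : V}
    (hflex : FlexiblyCrossLinked (link H B C w) (link H B C w') c a p)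
    (h : DenseBoxes H k e₀ A B C) (hk : 6 ≤ k)
    (he₀ : 7 / 2 * (k : ℝ) ^ 2 + 7 / 3 * k + 14 / 9 < e₀) (cA : #A = k + 2) (cB : #B = k + 2)
    (cC : #C = k + 2) (hw : w ∈ A) (hw' : w' ∈ A) (hne : w ≠ w') (hp : p ∈ B) :
    HasTiling H 2 A B C := by
  obtain ⟨hc₁, hc₂, -⟩ := mem_link.1 hflex.left_mem
  obtain ⟨ha₁, ha₂, -⟩ := mem_link.1 hflex.mem
  have hR : {c.1, a.1, p} ⊆ B := by simp [insert_subset_iff, *]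
  have cR : #{c.1, a.1, p} = 3 := card_eq_three.2
    ⟨_, _, _, hflex.apart.1, hflex.row_ne_fst.symm, hflex.row_ne_fst'.symm, rfl⟩
  set Y := A \ {w, w'}
  set Z := C \ {c.2, a.2}
  have cY : #Y = k := by
    rw [card_sdiff_of_subset (by simp [insert_subset_iff, *]), card_pair hne, cA]; rfl
  have cZ : #Z = k := by
    rw [card_sdiff_of_subset (by simp [insert_subset_iff, *]), card_pair hflex.apart.2, cC]; rfl
  have cBR : #(B \ {c.1, a.1, p}) + 1 = k := by rw [card_sdiff_of_subset hR]; omega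
  by_cases hlight : ∃ r ∈ ({c.1, a.1, p} : Finset V), #(link H Y Z r) < e₀ - (3 * k ^ 2 - k)
  · obtain ⟨r, hr, hlt⟩ := hlight
    refine hflex.hasTiling_two hw hw' hne ?_
    by_contra hcon
    have hcount := tripleCount_le_of_not_hasCentredCopy hcon cY.le (by omega)
    have hle := h.swap₁₂.le_tripleCount_add_card_link
      (mem_sdiff.2 ⟨hR hr, fun h => (mem_sdiff.1 h).2 hr⟩) sdiff_subset sdiff_subset sdiff_subset
      cBR cY cZ
    rw [← tripleCount_swap₁₂, ← tripleCount_swap₂₃, ← tripleCount_swap₁₂] at hle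
    rw [cY, cZ, show (#(B \ {c.1, a.1, p}) : ℝ) = k - 1 by rw [← cBR]; push_cast; ring] at hcount
    linarith
  push Not at hlight
  exact ((h.mono sdiff_subset subset_rfl sdiff_subset).hasTiling_two_of_le_card_link hk he₀ cY cB cZ
    hc₁ ha₁ hflex.apart.1 (hlight _ (by simp)) (hlight _ (by simp))).mono sdiff_subset subset_rfl
    sdiff_subset

lemma DenseBoxes.forall_le_card_link_or (h : DenseBoxes H k e₀ A B C) {A' B' C' X Z : Finset V}
    (hA : A' ⊆ A) (hB : B' ⊆ B) (hC : C' ⊆ C) (hX : X ⊆ A \ A') (hZ : Z ⊆ C \ C')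
    (cA : #A' + 1 = k) (cB : #B' = k) (cC : #C' + 1 = k) (hcopy : ¬ HasCentredCopy H B' A' C') :
    (∀ w ∈ X, e₀ - 3 * k ^ 2 + 3 * k - 1 ≤ 2 * (#(link H B' C' w) : ℝ)) ∨
      ∀ z ∈ Z, e₀ - 3 * k ^ 2 + 3 * k - 1 ≤ 2 * (#(link H B' A' z) : ℝ) := by
  by_contra! hcon
  obtain ⟨⟨w, hw, hlw⟩, z, hz, hlz⟩ := hcon
  obtain ⟨hwA, hwA'⟩ := mem_sdiff.1 (hX hw)
  obtain ⟨hzC, hzC'⟩ := mem_sdiff.1 (hZ hz)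
  have hcount := tripleCount_le_of_not_hasCentredCopy hcopy (M := #A') le_rfl (by omega)
  have hdense := h.swap₁₂ B' hB (insert w A') (insert_subset hwA hA) (insert z C')
    (insert_subset hzC hC) cB (by rw [card_insert_of_notMem hwA', cA])
    (by rw [card_insert_of_notMem hzC', cC])
  have hle : (tripleCount H B' (insert w A') (insert z C') : ℝ) ≤ tripleCount H B' A' C' +
      #(link H B' C' w) + #(link H B' A' z) + #B' := by
    exact_mod_cast tripleCount_insert_insert_le hwA' hzC'
  rw [cB, show #C' = #A' by omega, show (#A' : ℝ) = k - 1 by rw [← cA]; push_cast; ring] at hcount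
  rw [cB] at hle
  linarith

/-- The four vertices of `insert x₀ X` have links in `B × C` of average size more than a quarter of
`#B * #C`, so two of them have a common cell, and one of these two is in `X`. -/
lemma DenseBoxes.hasTiling_two_of_forall_le_card_link (h : DenseBoxes H k e₀ A B C) (hk : 6 ≤ k)
    (he₀ : 7 / 2 * (k : ℝ) ^ 2 + 7 / 3 * k + 14 / 9 < e₀) (cA : #A = k + 2) (cB : #B = k + 2)
    (cC : #C = k + 2) {X B' C' : Finset V} (hX : X ⊆ A) (hB' : B' ⊆ B) (hC' : C' ⊆ C) (cX : #X = 3)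
    (cB' : #B' = k) (cC' : #C' + 1 = k) {x₀ : V} (hx₀ : x₀ ∈ A \ X)
    (hmax : ∀ w ∈ X, #(link H B C w) ≤ #(link H B C x₀))
    (hlink : ∀ w ∈ X, e₀ - 3 * k ^ 2 + 3 * k - 1 ≤ 2 * (#(link H B' C' w) : ℝ)) :
    HasTiling H 2 A B C := by
  have hk' : (6 : ℝ) ≤ k := by exact_mod_cast hk
  rw [mem_sdiff] at hx₀
  have hlinkX : ∀ w ∈ X, e₀ - 3 * k ^ 2 + 3 * k - 1 ≤ 2 * (#(link H B C w) : ℝ) := fun w hw => by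
    have : (#(link H B' C' w) : ℝ) ≤ #(link H B C w) := by
      exact_mod_cast card_le_card (link_mono hB' hC' w)
    linarith [hlink w hw]
  have hlink' : ∀ w ∈ insert x₀ X, e₀ - 3 * k ^ 2 + 3 * k - 1 ≤ 2 * (#(link H B C w) : ℝ) := by
    refine forall_mem_insert _ _ _ |>.2 ⟨?_, hlinkX⟩
    obtain ⟨w, hw⟩ : X.Nonempty := card_pos.1 (by omega)
    have : (#(link H B C w) : ℝ) ≤ #(link H B C x₀) := by exact_mod_cast hmax w hw
    linarith [hlinkX w hw]
  obtain ⟨w, hw, w', hw', hne, c, hc, hc'⟩ := exists_mem_inter_of_card_lt_sum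
    (fun w (_ : w ∈ insert x₀ X) => link_subset H B C w) (by
      have := sum_le_sum hlink'
      rw [sum_const, card_insert_of_notMem hx₀.2, cX, nsmul_eq_mul, ← mul_sum] at this
      rw [card_product, cB, cC, ← Nat.cast_lt (α := ℝ)]
      push_cast at this ⊢
      nlinarith)
  wlog hwX : w' ∈ X generalizing w w'
  · exact this w' hw' w hw hne.symm hc' hc (by simp only [mem_insert] at hw hw'; grind)
  have hlarge : 3 * k + 6 < #(link H B C w) := by
    have : (3 * k + 6 : ℝ) < #(link H B C w) := by nlinarith [hlink' w hw]
    exact_mod_cast this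
  have hlarge' : 5 * k < #(link H B' C' w') + 5 := by
    have : (5 * k : ℝ) < #(link H B' C' w') + 5 := by nlinarith [hlink w' hwX]
    exact_mod_cast this
  obtain ⟨a, p, hflex⟩ := exists_flexiblyCrossLinked hc hc' (link_subset H B C w) (by omega)
    (link_mono hB' hC' w') (link_subset H B' C' w') (by omega) (by omega)
  have hA : insert x₀ X ⊆ A := insert_subset hx₀.1 hX
  refine hflex.hasTiling_two_of_denseBoxes h hk he₀ cA cB cC (hA hw) (hA hw') hne ?_
  obtain ⟨e, he⟩ := card_pos.1 (hflex.five_le_card_row.trans_lt' (by norm_num))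
  rw [mem_filter, mem_link] at he
  exact he.2 ▸ he.1.1

/-- Two vertices of largest links are kept out of the copy that is removed first. -/
lemma DenseBoxes.hasTiling_two_of_card_add_two (h : DenseBoxes H k e₀ A B C) (hk : 6 ≤ k)
    (he₀ : 7 / 2 * (k : ℝ) ^ 2 + 7 / 3 * k + 14 / 9 < e₀) (cA : #A = k + 2) (cB : #B = k + 2)
    (cC : #C = k + 2) : HasTiling H 2 A B C := by
  have hk' : (6 : ℝ) ≤ k := by exact_mod_cast hk
  obtain ⟨x₀, hx₀, hmaxA⟩ := exists_max_image A (fun w => #(link H B C w)) (card_pos.1 (by omega))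
  obtain ⟨z₀, hz₀, hmaxC⟩ := exists_max_image C (fun z => #(link H B A z)) (card_pos.1 (by omega))
  obtain ⟨Y, hY, X, hX, Z, hZ, cY, cX, cZ, hcopy⟩ := (h.swap₁₂.hasCentredCopy (by nlinarith)
    subset_rfl (erase_subset x₀ A) (erase_subset z₀ C) (by omega)
    (by rw [card_erase_of_mem hx₀]; omega) (by rw [card_erase_of_mem hz₀]; omega)).exists_card_eq
  rw [subset_erase] at hX hZ
  by_cases hrest : HasCentredCopy H (B \ Y) (A \ X) (C \ Z)
  · exact .succ hX.1 hY hZ.1 (.inr (.inl hcopy)) (HasCopy.hasTiling_one (.inr (.inl hrest)))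
  have cAX : #(A \ X) + 1 = k := by rw [card_sdiff_of_subset hX.1]; omega
  have cBY : #(B \ Y) = k := by rw [card_sdiff_of_subset hY]; omega
  have cCZ : #(C \ Z) + 1 = k := by rw [card_sdiff_of_subset hZ.1]; omega
  rcases h.forall_le_card_link_or sdiff_subset sdiff_subset sdiff_subset
    (Finset.sdiff_sdiff_eq_self hX.1).ge (Finset.sdiff_sdiff_eq_self hZ.1).ge cAX cBY cCZ hrest
    with hlink | hlink
  · exact h.hasTiling_two_of_forall_le_card_link hk he₀ cA cB cC hX.1 sdiff_subset sdiff_subset cX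
      cBY cCZ (mem_sdiff.2 ⟨hx₀, hX.2⟩) (fun w hw => hmaxA w (hX.1 hw)) hlink
  · exact (h.swap₁₂.swap₂₃.swap₁₂.hasTiling_two_of_forall_le_card_link hk he₀ cC cB cA hZ.1
      sdiff_subset sdiff_subset cZ cBY cAX (mem_sdiff.2 ⟨hz₀, hZ.2⟩)
      (fun z hz => hmaxC z (hZ.1 hz)) hlink).swap₁₂.swap₂₃.swap₁₂

end Exchange

section Boxes

variable {V : Type*} {P : Finset V → Finset V → Finset V → Prop} {V₁ V₂ V₃ : Finset V}
  {n₁ n₂ n₃ m₁ m₂ m₃ : ℕ}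

/-- Every box `A × B × C` in `V₁ × V₂ × V₃` with sides at least `n₁`, `n₂`, `n₃` satisfies `P`. -/
def EveryBox (P : Finset V → Finset V → Finset V → Prop) (V₁ V₂ V₃ : Finset V) (n₁ n₂ n₃ : ℕ) :
    Prop :=
  ∀ A ⊆ V₁, ∀ B ⊆ V₂, ∀ C ⊆ V₃, n₁ ≤ #A → n₂ ≤ #B → n₃ ≤ #C → P A B C

lemma EveryBox.mono (h : EveryBox P V₁ V₂ V₃ n₁ n₂ n₃) (h₁ : n₁ ≤ m₁) (h₂ : n₂ ≤ m₂)
    (h₃ : n₃ ≤ m₃) : EveryBox P V₁ V₂ V₃ m₁ m₂ m₃ :=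
  fun A hA B hB C hC cA cB cC =>
    h A hA B hB C hC (h₁.trans cA) (h₂.trans cB) (h₃.trans cC)

variable [DecidableEq V] {H : Finset (Finset V)} {q : ℕ}

lemma EveryBox.swap₁₂ (h : EveryBox (HasTiling H q) V₁ V₂ V₃ n₁ n₂ n₃) :
    EveryBox (HasTiling H q) V₂ V₁ V₃ n₂ n₁ n₃ :=
  fun B hB A hA C hC cB cA cC => (h A hA B hB C hC cA cB cC).swap₁₂

lemma EveryBox.swap₂₃ (h : EveryBox (HasTiling H q) V₁ V₂ V₃ n₁ n₂ n₃) :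
    EveryBox (HasTiling H q) V₁ V₃ V₂ n₁ n₃ n₂ :=
  fun A hA C hC B hB cA cC cB => (h A hA B hB C hC cA cB cC).swap₂₃

lemma everyBox_hasTiling_of_card_eq
    (h : ∀ A ⊆ V₁, ∀ B ⊆ V₂, ∀ C ⊆ V₃, #A = n₁ → #B = n₂ → #C = n₃ → HasTiling H q A B C) :
    EveryBox (HasTiling H q) V₁ V₂ V₃ n₁ n₂ n₃ := by
  intro A hA B hB C hC cA cB cC
  obtain ⟨A', hA', cA'⟩ := exists_subset_card_eq cA
  obtain ⟨B', hB', cB'⟩ := exists_subset_card_eq cB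
  obtain ⟨C', hC', cC'⟩ := exists_subset_card_eq cC
  exact (h A' (hA'.trans hA) B' (hB'.trans hB) C' (hC'.trans hC) cA' cB' cC').mono hA' hB' hC'

lemma EveryBox.add_centred₁ (h : EveryBox (HasTiling H q) V₁ V₂ V₃ n₁ n₂ n₃)
    (hcopy : EveryBox (HasCentredCopy H) V₁ V₂ V₃ (n₁ + 2) (n₂ + 3) (n₃ + 3)) (t : ℕ) :
    EveryBox (HasTiling H (q + t)) V₁ V₂ V₃ (n₁ + 2 * t) (n₂ + 3 * t) (n₃ + 3 * t) := by
  induction t with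
  | zero => exact h
  | succ t ih =>
    intro A hA B hB C hC cA cB cC
    obtain ⟨X, hX, Y, hY, Z, hZ, cX, cY, cZ, hXYZ⟩ := (hcopy A hA B hB C hC
      (by omega) (by omega) (by omega)).exists_card_eq
    refine .succ hX hY hZ (.inl hXYZ) (ih _ (sdiff_subset.trans hA) _ (sdiff_subset.trans hB) _
      (sdiff_subset.trans hC) ?_ ?_ ?_)
    · rw [card_sdiff_of_subset hX]; omega
    · rw [card_sdiff_of_subset hY]; omega
    · rw [card_sdiff_of_subset hZ]; omega

lemma EveryBox.add_centred₂ (h : EveryBox (HasTiling H q) V₁ V₂ V₃ n₁ n₂ n₃)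
    (hcopy : EveryBox (HasCentredCopy H) V₂ V₁ V₃ (n₂ + 2) (n₁ + 3) (n₃ + 3)) (t : ℕ) :
    EveryBox (HasTiling H (q + t)) V₁ V₂ V₃ (n₁ + 3 * t) (n₂ + 2 * t) (n₃ + 3 * t) :=
  (h.swap₁₂.add_centred₁ hcopy t).swap₁₂

lemma EveryBox.add_centred₃ (h : EveryBox (HasTiling H q) V₁ V₂ V₃ n₁ n₂ n₃)
    (hcopy : EveryBox (HasCentredCopy H) V₃ V₁ V₂ (n₃ + 2) (n₁ + 3) (n₂ + 3)) (t : ℕ) :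
    EveryBox (HasTiling H (q + t)) V₁ V₂ V₃ (n₁ + 3 * t) (n₂ + 3 * t) (n₃ + 2 * t) :=
  (h.swap₂₃.swap₁₂.add_centred₁ hcopy t).swap₁₂.swap₂₃

lemma EveryBox.hasTiling_one (h : EveryBox (HasCentredCopy H) V₃ V₁ V₂ n₃ n₁ n₂) :
    EveryBox (HasTiling H 1) V₁ V₂ V₃ n₁ n₂ n₃ :=
  fun A hA B hB C hC cA cB cC =>
    HasCopy.hasTiling_one (.inr (.inr (h C hC A hA B hB cC cA cB)))

end Boxes

section Regularity

variable {V : Type*} {ε : ℝ} {U : Finset V}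

/-- The least number of vertices of `U` to which `ε`-regularity applies. -/
noncomputable def threshold (ε : ℝ) (U : Finset V) : ℕ := ⌈ε * #U⌉₊

lemma threshold_le {n : ℕ} : threshold ε U ≤ n ↔ ε * #U ≤ n := Nat.ceil_le

lemma le_threshold (ε : ℝ) (U : Finset V) : ε * #U ≤ threshold ε U := Nat.le_ceil _

lemma threshold_lt_add_one (hε : 0 ≤ ε) : threshold ε U < ε * #U + 1 :=
  Nat.ceil_lt_add_one (by positivity)

lemma threshold_mono (hε : 0 ≤ ε) {W : Finset V} (h : #U ≤ #W) :
    threshold ε U ≤ threshold ε W :=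
  Nat.ceil_mono (by gcongr)

variable [DecidableEq V] {H : Finset (Finset V)} {V₁ V₂ V₃ : Finset V}

lemma mul_add_two_mul_le {s a b : ℝ} (hs : 0 < s)
    (h : (2 / 3 * s ≤ a ∧ s ≤ b) ∨ (5 / 6 * s ≤ a ∧ 7 / 8 * s ≤ b) ∨ (s ≤ a ∧ 5 / 6 * s ≤ b)) :
    s * (b + 2 * a) ≤ 7 / 2 * (a * b) := by
  have ha : 0 ≤ a := by rcases h with h | h | h <;> linarith
  have hb : 0 ≤ b := by rcases h with h | h | h <;> linarith
  rcases h with ⟨hsa, hsb⟩ | ⟨hsa, hsb⟩ | ⟨hsa, hsb⟩ <;>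
    nlinarith [mul_le_mul_of_nonneg_right hsa hb, mul_le_mul_of_nonneg_right hsb ha,
      mul_nonneg ha hb]

lemma hasCentredCopy_of_mul_le_tripleCount {A B C : Finset V} {s : ℝ} (hs : 0 < s)
    (hεs : 7 / 2 < ε * s) (hA : 0 < #A) (hB : 0 < #B) (hC : 0 < #C)
    (hcount : ε * (#A * #B * #C) ≤ tripleCount H A B C)
    (hAB : s * (#B + 2 * #A) ≤ 7 / 2 * (#A * #B)) (hAC : s * (#C + 2 * #A) ≤ 7 / 2 * (#A * #C)) :
    HasCentredCopy H A B C := by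
  have key : ∀ {n : ℕ}, 0 < n → s * (n + 2 * #A) ≤ 7 / 2 * (#A * n) →
      (n + 2 * #A : ℝ) < ε * (#A * n) := by
    intro n hn h
    have : (0 : ℝ) < #A * n := by positivity
    refine lt_of_mul_lt_mul_left ?_ hs.le
    calc s * (n + 2 * #A) ≤ 7 / 2 * (#A * n) := h
      _ < ε * s * (#A * n) := by gcongr
      _ = s * (ε * (#A * n)) := by ring
  have hB' : (0 : ℝ) < #B := by positivity
  have hC' : (0 : ℝ) < #C := by positivity
  rcases le_total #B #C with hBC | hCB
  · refine hasCentredCopy_of_lt_tripleCount hBC le_rfl ?_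
    rw [← Nat.cast_lt (α := ℝ)]
    push_cast
    nlinarith [key hB hAB]
  · refine hasCentredCopy_of_lt_tripleCount le_rfl hCB ?_
    rw [← Nat.cast_lt (α := ℝ)]
    push_cast
    nlinarith [key hC hAC]

/-- The lower half of `ε`-regularity with density at least `2 * ε`. -/
def LowerRegular (H : Finset (Finset V)) (ε : ℝ) (V₁ V₂ V₃ : Finset V) : Prop :=
  ∀ A ⊆ V₁, ∀ B ⊆ V₂, ∀ C ⊆ V₃, ε * #V₁ ≤ #A → ε * #V₂ ≤ #B → ε * #V₃ ≤ #C →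
    ε * (#A * #B * #C) ≤ tripleCount H A B C

/-- A lower regular triple whose sizes satisfy the assumptions of the tiling theorem. -/
structure Admissible (H : Finset (Finset V)) (ε : ℝ) (V₁ V₂ V₃ : Finset V) : Prop where
  eps_pos : 0 < ε
  lowerRegular : LowerRegular H ε V₁ V₂ V₃
  card_two_le : #V₂ ≤ #V₁
  card_three_le : #V₃ ≤ #V₂
  balanced : 5 * #V₁ ≤ 3 * (#V₂ + #V₃)
  lt_card : 7 < 2 * ε ^ 2 * #V₁

namespace Admissible

variable {n₁ n₂ n₃ q T K : ℕ}

lemma lt_mul (h : Admissible H ε V₁ V₂ V₃) : 7 / 2 < ε * (ε * #V₁) := by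
  have := h.lt_card
  linarith

lemma size_pos (h : Admissible H ε V₁ V₂ V₃) : 0 < ε * #V₁ :=
  pos_of_mul_pos_right (by linarith [h.lt_mul]) h.eps_pos.le

lemma le_mul_card_two (h : Admissible H ε V₁ V₂ V₃) : 5 / 6 * (ε * #V₁) ≤ ε * #V₂ := by
  have hcard : 5 * #V₁ ≤ 6 * #V₂ := by have := h.balanced; have := h.card_three_le; omega
  have hcard' : (5 * #V₁ : ℝ) ≤ 6 * #V₂ := by exact_mod_cast hcard
  nlinarith [h.eps_pos]

lemma le_mul_card_three (h : Admissible H ε V₁ V₂ V₃) : 2 / 3 * (ε * #V₁) ≤ ε * #V₃ := by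
  have hcard : 2 * #V₁ ≤ 3 * #V₃ := by have := h.balanced; have := h.card_two_le; omega
  have hcard' : (2 * #V₁ : ℝ) ≤ 3 * #V₃ := by exact_mod_cast hcard
  nlinarith [h.eps_pos]

lemma threshold_two_le (h : Admissible H ε V₁ V₂ V₃) : threshold ε V₂ ≤ threshold ε V₁ :=
  threshold_mono h.eps_pos.le h.card_two_le

lemma threshold_three_le (h : Admissible H ε V₁ V₂ V₃) : threshold ε V₃ ≤ threshold ε V₂ :=
  threshold_mono h.eps_pos.le h.card_three_le

lemma everyBox_centred₃ (h : Admissible H ε V₁ V₂ V₃) (h₁ : threshold ε V₁ ≤ n₁)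
    (h₂ : threshold ε V₂ ≤ n₂) (h₃ : threshold ε V₃ ≤ n₃)
    (h₂₃ : ε * #V₁ ≤ n₂ ∨ 15 / 8 * (ε * #V₁) ≤ n₂ + n₃) :
    EveryBox (HasCentredCopy H) V₃ V₁ V₂ n₃ n₁ n₂ := by
  intro C hC A hA B hB cC cA cB
  have hs := h.size_pos
  have h₁ := threshold_le.1 (h₁.trans cA)
  have h₂ := threshold_le.1 (h₂.trans cB)
  have h₃ := threshold_le.1 (h₃.trans cC)
  have hB' := h.le_mul_card_two.trans h₂
  have hC' := h.le_mul_card_three.trans h₃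
  have hcount := h.lowerRegular A hA B hB C hC h₁ h₂ h₃
  rw [tripleCount_swap₂₃, tripleCount_swap₁₂] at hcount
  have hcB : (n₂ : ℝ) ≤ #B := by exact_mod_cast cB
  have hcC : (n₃ : ℝ) ≤ #C := by exact_mod_cast cC
  refine hasCentredCopy_of_mul_le_tripleCount hs h.lt_mul (by rify; linarith) (by rify; linarith)
    (by rify; linarith) (by linarith) (mul_add_two_mul_le hs (.inl ⟨hC', h₁⟩))
    (mul_add_two_mul_le hs ?_)
  by_cases hle : ε * #V₁ ≤ #B
  · exact .inl ⟨hC', hle⟩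
  have hsum : 15 / 8 * (ε * #V₁) ≤ n₂ + n₃ := h₂₃.resolve_left fun hn => hle (hn.trans hcB)
  by_cases hle' : 7 / 8 * (ε * #V₁) ≤ #B
  · exact .inr (.inl ⟨by linarith, hle'⟩)
  · exact .inr (.inr ⟨by linarith, hB'⟩)

lemma everyBox_centred₂ (h : Admissible H ε V₁ V₂ V₃) (h₁ : threshold ε V₁ ≤ n₁)
    (h₂ : threshold ε V₂ ≤ n₂) (h₃ : threshold ε V₃ ≤ n₃) (h₃' : 7 / 8 * (ε * #V₁) ≤ n₃) :
    EveryBox (HasCentredCopy H) V₂ V₁ V₃ n₂ n₁ n₃ := by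
  intro B hB A hA C hC cB cA cC
  have hs := h.size_pos
  have h₁ := threshold_le.1 (h₁.trans cA)
  have h₂ := threshold_le.1 (h₂.trans cB)
  have h₃ := threshold_le.1 (h₃.trans cC)
  have hB' := h.le_mul_card_two.trans h₂
  have hC' := h₃'.trans (Nat.cast_le.2 cC)
  have hcount := h.lowerRegular A hA B hB C hC h₁ h₂ h₃
  rw [tripleCount_swap₁₂] at hcount
  exact hasCentredCopy_of_mul_le_tripleCount hs h.lt_mul (by rify; linarith) (by rify; linarith)
    (by rify; linarith) (by linarith) (mul_add_two_mul_le hs (.inl ⟨by linarith, h₁⟩))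
    (mul_add_two_mul_le hs (.inr (.inl ⟨hB', hC'⟩)))

lemma everyBox_centred₁ (h : Admissible H ε V₁ V₂ V₃) (h₁ : threshold ε V₁ ≤ n₁)
    (h₂ : threshold ε V₁ ≤ n₂) (h₃ : threshold ε V₁ ≤ n₃) :
    EveryBox (HasCentredCopy H) V₁ V₂ V₃ n₁ n₂ n₃ := by
  intro A hA B hB C hC cA cB cC
  have hs := h.size_pos
  have h₁ := threshold_le.1 (h₁.trans cA)
  have h₂' := threshold_le.1 (h₂.trans cB)
  have h₃' := threshold_le.1 (h₃.trans cC)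
  have hcount := h.lowerRegular A hA B hB C hC h₁
    (threshold_le.1 (h.threshold_two_le.trans (h₂.trans cB)))
    (threshold_le.1 ((h.threshold_three_le.trans h.threshold_two_le).trans (h₃.trans cC)))
  exact hasCentredCopy_of_mul_le_tripleCount hs h.lt_mul (by rify; linarith) (by rify; linarith)
    (by rify; linarith) hcount (mul_add_two_mul_le hs (.inl ⟨by linarith, h₂'⟩))
    (mul_add_two_mul_le hs (.inl ⟨by linarith, h₃'⟩))

lemma denseBoxes (h : Admissible H ε V₁ V₂ V₃) :
    DenseBoxes H (threshold ε V₁) (ε * (threshold ε V₁ : ℝ) ^ 3) V₁ V₂ V₃ := by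
  intro A hA B hB C hC cA cB cC
  have hcount := h.lowerRegular A hA B hB C hC (threshold_le.1 cA.ge)
    (threshold_le.1 (h.threshold_two_le.trans cB.ge))
    (threshold_le.1 ((h.threshold_three_le.trans h.threshold_two_le).trans cC.ge))
  rw [cA, cB, cC] at hcount
  linarith

/-- The classes shrink from `#Vᵢ` to `nᵢ` by removing `#V₁ + #V₂ + #V₃ - n₁ - n₂ - n₃ = 8 * t`
vertices; the number of copies with two vertices in `Vᵢ` is `nᵢ + 3 * t - #Vᵢ`. -/
lemma hasTiling_add (h : Admissible H ε V₁ V₂ V₃) (t : ℕ)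
    (hbox : EveryBox (HasTiling H q) V₁ V₂ V₃ n₁ n₂ n₃)
    (h₁ : threshold ε V₁ ≤ n₁ + 2) (h₂ : threshold ε V₁ ≤ n₂ + 2) (h₃ : threshold ε V₁ ≤ n₃ + 2)
    (c₁ : #V₁ ≤ n₁ + 3 * t) (c₂ : #V₂ ≤ n₂ + 3 * t) (c₃ : #V₃ ≤ n₃ + 3 * t)
    (hsum : #V₁ + #V₂ + #V₃ = n₁ + n₂ + n₃ + 8 * t) : HasTiling H (q + t) V₁ V₂ V₃ := by
  obtain ⟨t₁, ht₁⟩ := Nat.exists_eq_add_of_le c₁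
  obtain ⟨t₂, ht₂⟩ := Nat.exists_eq_add_of_le c₂
  obtain ⟨t₃, ht₃⟩ := Nat.exists_eq_add_of_le c₃
  obtain rfl : t = t₁ + t₂ + t₃ := by omega
  have h₂' := h.threshold_two_le
  have h₃' := h.threshold_three_le
  have hs := le_threshold ε V₁
  have box₁ := hbox.add_centred₁ (h.everyBox_centred₁ (by omega) (by omega) (by omega)) t₁
  have box₂ := box₁.add_centred₂ (h.everyBox_centred₂ (by omega) (by omega) (by omega)
    (by have : (threshold ε V₁ : ℝ) ≤ ((n₃ + 3 * t₁ + 3 : ℕ) : ℝ) := by exact_mod_cast (by omega)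
        linarith [h.size_pos])) t₂
  have box₃ := box₂.add_centred₃ (h.everyBox_centred₃ (by omega) (by omega) (by omega)
    (.inl (by
      have : (threshold ε V₁ : ℝ) ≤ ((n₂ + 3 * t₁ + 2 * t₂ + 3 : ℕ) : ℝ) := by
        exact_mod_cast (by omega)
      linarith))) t₃
  rw [← add_assoc, ← add_assoc]
  exact box₃ V₁ subset_rfl V₂ subset_rfl V₃ subset_rfl (by omega) (by omega) (by omega)

lemma eps_lt_one (h : Admissible H ε V₁ V₂ V₃) (hT : #V₁ + #V₂ + #V₃ = T + 8 * K)
    (hs : 3 * (ε * #V₁) < T) : ε < 1 := by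
  have hT' : (T : ℝ) ≤ #V₁ + #V₂ + #V₃ := by
    exact_mod_cast hT.ge.trans' (Nat.le_add_right _ _)
  have h₂ : (#V₂ : ℝ) ≤ #V₁ := by exact_mod_cast h.card_two_le
  have h₃ : (#V₃ : ℝ) ≤ #V₂ := by exact_mod_cast h.card_three_le
  by_contra! hε
  nlinarith [(Nat.cast_nonneg #V₁ : (0 : ℝ) ≤ _)]

lemma threshold_add_two_mul_le (h : Admissible H ε V₁ V₂ V₃)
    (hT : #V₁ + #V₂ + #V₃ = T + 8 * K) (hs : 3 * (ε * #V₁) < T) {U : Finset V}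
    (hU : #V₁ + #V₂ + #V₃ ≤ 4 * #U) : threshold ε U + 2 * K ≤ #U := by
  have hU₄ : (T + 8 * K : ℝ) ≤ 4 * #U := by exact_mod_cast hT ▸ hU
  have h₁ : (T + 8 * K : ℝ) ≤ 3 * #V₁ := by
    have := h.card_two_le
    have := h.card_three_le
    exact_mod_cast (by omega : T + 8 * K ≤ 3 * #V₁)
  have hε := h.eps_pos
  have hε₁ := h.eps_lt_one hT hs
  have hTK : ε * (T + 8 * K) ≤ T := by nlinarith
  have hlt : ((threshold ε U + 2 * K : ℕ) : ℝ) < (#U + 1 : ℕ) := by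
    have := threshold_lt_add_one hε.le (U := U)
    push_cast
    nlinarith
  exact Nat.lt_succ_iff.1 (by exact_mod_cast hlt)

lemma le_mul_of_add_eq (h : Admissible H ε V₁ V₂ V₃) (hT : #V₁ + #V₂ + #V₃ = T + 8 * K)
    (hs : 3 * (ε * #V₁) < T) {R : ℕ} (hR : #V₂ + #V₃ = R + 5 * K) :
    15 / 8 * (ε * #V₁) ≤ R := by
  have hTR : 5 * T ≤ 8 * R := by have := h.balanced; omega
  have hTR' : (5 * T : ℝ) ≤ 8 * R := by exact_mod_cast hTR
  linarith

lemma threshold_add_threshold_le (h : Admissible H ε V₁ V₂ V₃) (hε₁ : ε < 1) {n : ℕ}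
    (hV₁ : n + threshold ε V₁ + 1 ≤ #V₁) {R : ℕ} (hR : 5 * n + 3 * R = 3 * (#V₂ + #V₃)) :
    threshold ε V₂ + threshold ε V₃ ≤ R := by
  obtain ⟨p, hp⟩ := Nat.exists_eq_add_of_le h.balanced
  have hp' : (3 * (#V₂ + #V₃) : ℝ) = 5 * #V₁ + p := by exact_mod_cast hp
  have hεp : ε * p ≤ p := mul_le_of_le_one_left (Nat.cast_nonneg p) hε₁.le
  have hlt : (3 * (threshold ε V₂ + threshold ε V₃) : ℝ) < 6 + p + 5 * threshold ε V₁ := by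
    linear_combination 3 * threshold_lt_add_one h.eps_pos.le (U := V₂) +
      3 * threshold_lt_add_one h.eps_pos.le (U := V₃) + ε * hp' + hεp + 5 * le_threshold ε V₁
  have hlt' : 3 * (threshold ε V₂ + threshold ε V₃) < 6 + p + 5 * threshold ε V₁ := by
    exact_mod_cast hlt
  omega

lemma hasTiling_of_add_le (h : Admissible H ε V₁ V₂ V₃) (hT : #V₁ + #V₂ + #V₃ = T + 8 * K)
    (hs : 3 * (ε * #V₁) < T) (h₁ : threshold ε V₁ + 3 * K ≤ #V₁)
    (h₂ : threshold ε V₂ + 3 * K ≤ #V₂) (h₃ : threshold ε V₃ + 2 * K ≤ #V₃) :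
    HasTiling H (1 + K) V₁ V₂ V₃ := by
  have hR := h.le_mul_of_add_eq hT hs (R := #V₂ - 3 * K + (#V₃ - 2 * K)) (by omega)
  have hbox := h.everyBox_centred₃ (n₁ := #V₁ - 3 * K) (n₂ := #V₂ - 3 * K) (n₃ := #V₃ - 2 * K)
    (by omega) (by omega) (by omega) (.inr (by exact_mod_cast hR))
  exact hbox.hasTiling_one.add_centred₃ (hbox.mono (by omega) (by omega) (by omega)) K
    V₁ subset_rfl V₂ subset_rfl V₃ subset_rfl (by omega) (by omega) (by omega)

lemma hasTiling_of_lt_card_one (h : Admissible H ε V₁ V₂ V₃)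
    (hT : #V₁ + #V₂ + #V₃ = T + 8 * K) (hs : 3 * (ε * #V₁) < T)
    (hV₁ : 3 * K + threshold ε V₁ + 1 ≤ #V₁) : HasTiling H (1 + K) V₁ V₂ V₃ := by
  have hbal := h.balanced
  have h₁₂ := h.card_two_le
  have h₂₃ := h.card_three_le
  have hε₁ := h.eps_lt_one hT hs
  have keep₂ := h.threshold_add_two_mul_le hT hs (U := V₂) (by omega)
  have keep₃ := h.threshold_add_two_mul_le hT hs (U := V₃) (by omega)
  by_cases hV₂ : threshold ε V₂ + 3 * K ≤ #V₂
  · exact h.hasTiling_of_add_le hT hs (by omega) hV₂ keep₃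
  obtain ⟨R, hR⟩ : ∃ R, #V₂ + #V₃ = R + 5 * K := Nat.exists_eq_add_of_le' (by omega)
  obtain ⟨n₁, hn₁⟩ : ∃ n₁, #V₁ = n₁ + 3 * K := Nat.exists_eq_add_of_le' (by omega)
  have hthr := h.threshold_add_threshold_le hε₁ hV₁ (R := R) (by omega)
  obtain ⟨n₃, rfl⟩ := Nat.exists_eq_add_of_le ((Nat.le_add_right _ _).trans hthr)
  obtain ⟨t₂, ht₂⟩ := Nat.exists_eq_add_of_le (show #V₂ ≤ threshold ε V₂ + 3 * K by omega)
  obtain ⟨t₃, rfl⟩ := Nat.exists_eq_add_of_le (show t₂ ≤ K by omega)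
  have hR' := h.le_mul_of_add_eq hT hs hR
  push_cast at hR'
  have hn₃ : 7 / 8 * (ε * #V₁) ≤ (n₃ + 1 : ℝ) := by
    have : (threshold ε V₂ : ℝ) ≤ threshold ε V₁ := Nat.cast_le.2 h.threshold_two_le
    have := threshold_lt_add_one h.eps_pos.le (U := V₁)
    linarith
  have hbox := h.everyBox_centred₃ (n₁ := n₁) (n₂ := threshold ε V₂) (n₃ := n₃)
    (by omega) le_rfl (by omega) (.inr hR')
  have htiling := (hbox.hasTiling_one.add_centred₂ (h.everyBox_centred₂ (by omega) (by omega)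
    (by omega) (by push_cast; linarith)) t₂).add_centred₃
    (hbox.mono (by omega) (by omega) (by omega)) t₃
  rw [← add_assoc]
  exact htiling V₁ subset_rfl V₂ subset_rfl V₃ subset_rfl (by omega) (by omega) (by omega)

lemma hasTiling_of_card_eq (h : Admissible H ε V₁ V₂ V₃) (hT : #V₁ + #V₂ + #V₃ = T)
    (hs : 3 * (ε * #V₁) < T) : HasTiling H 1 V₁ V₂ V₃ := by
  have hε₁ := h.eps_lt_one (K := 0) hT hs
  have hthr : ∀ U : Finset V, threshold ε U ≤ #U := fun U =>
    threshold_le.2 (mul_le_of_le_one_left (Nat.cast_nonneg _) hε₁.le)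
  exact h.hasTiling_of_add_le (K := 0) hT hs (hthr V₁) (hthr V₂) (hthr V₃)

lemma six_le_threshold (h : Admissible H ε V₁ V₂ V₃)
    (hs : 3 * (ε * #V₁) + 1 < 3 * threshold ε V₁) (hV₁ : threshold ε V₁ + 2 ≤ #V₁) :
    6 ≤ threshold ε V₁ := by
  have hV₁' : (threshold ε V₁ + 2 : ℝ) ≤ #V₁ := by exact_mod_cast hV₁
  have hsq : 7 / 2 * (threshold ε V₁ + 2 : ℝ) ≤ (ε * #V₁) ^ 2 :=
    calc 7 / 2 * (threshold ε V₁ + 2 : ℝ) ≤ ε * (ε * #V₁) * #V₁ :=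
          mul_le_mul h.lt_mul.le hV₁' (by positivity) (by linarith [h.lt_mul])
      _ = (ε * #V₁) ^ 2 := by ring
  by_contra! hk
  have hk' : (threshold ε V₁ : ℝ) ≤ 5 := by exact_mod_cast Nat.le_of_lt_succ hk
  nlinarith [h.size_pos]

lemma lt_mul_threshold_pow (h : Admissible H ε V₁ V₂ V₃) (hs : 3 * (ε * #V₁) < T) {c : ℝ}
    (hc : 0 ≤ c) (hT : T + c = 3 * threshold ε V₁) :
    7 / 2 * (threshold ε V₁ : ℝ) ^ 2 + 7 / 6 * c * threshold ε V₁ + 7 / 18 * c ^ 2 <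
      ε * (threshold ε V₁ : ℝ) ^ 3 := by
  generalize (threshold ε V₁ : ℝ) = k at *
  have hT₀ : (0 : ℝ) < T := by linarith [h.size_pos]
  have hεT : 21 / 2 < ε * T := by nlinarith [h.eps_pos, h.lt_mul]
  have hk : 0 < k := by linarith
  refine lt_of_mul_lt_mul_right ?_ hT₀.le
  calc (7 / 2 * k ^ 2 + 7 / 6 * c * k + 7 / 18 * c ^ 2) * T
      = 21 / 2 * k ^ 3 - 7 / 18 * c ^ 3 := by rw [eq_sub_of_add_eq hT]; ring
    _ ≤ 21 / 2 * k ^ 3 := sub_le_self _ (by positivity)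
    _ < ε * T * k ^ 3 := by gcongr
    _ = ε * k ^ 3 * T := by ring

lemma hasTiling_of_threshold_add_threshold_lt (h : Admissible H ε V₁ V₂ V₃)
    (hT : #V₁ + #V₂ + #V₃ = T + 8 * K) (hs : 3 * (ε * #V₁) < T) (hK : 0 < K)
    (hV₁ : #V₁ ≤ 3 * K + threshold ε V₁) (hT₂ : T + 2 = 3 * threshold ε V₁)
    (h₂ : threshold ε V₂ + 1 = threshold ε V₁) (h₃ : threshold ε V₃ + 1 = threshold ε V₁) :
    HasTiling H (1 + K) V₁ V₂ V₃ := by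
  have h₁₂ := h.card_two_le
  have h₂₃ := h.card_three_le
  have hT₂' : (T + 2 : ℝ) = 3 * threshold ε V₁ := by exact_mod_cast hT₂
  have h₂' : (threshold ε V₂ + 1 : ℝ) = threshold ε V₁ := by exact_mod_cast h₂
  have h₃' : (threshold ε V₃ + 1 : ℝ) = threshold ε V₁ := by exact_mod_cast h₃
  have hk : (6 : ℝ) ≤ threshold ε V₁ :=
    Nat.ofNat_le_cast.2 (h.six_le_threshold (by linarith) (by omega))
  have hne : #V₂ ≠ #V₁ := fun hcard => by
    rw [threshold, hcard, ← threshold] at h₂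
    omega
  have hbox := h.everyBox_centred₃ le_rfl le_rfl le_rfl (.inr (by linarith))
  exact h.hasTiling_add K hbox.hasTiling_one (by omega) (by omega) (by omega) (by omega) (by omega)
    (by omega) (by omega)

lemma hasTiling_of_two_mul_threshold_add_le (h : Admissible H ε V₁ V₂ V₃)
    (hT : #V₁ + #V₂ + #V₃ = T + 8 * K) (hK : 0 < K) (hV₁ : #V₁ ≤ 3 * K + threshold ε V₁)
    (hkT : 3 * threshold ε V₁ ≤ T + 2) (h₃ : 2 * threshold ε V₁ + threshold ε V₃ ≤ T) :
    HasTiling H (1 + K) V₁ V₂ V₃ := by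
  have h₁₂ := h.card_two_le
  have h₂₃ := h.card_three_le
  have hthr : #V₃ = #V₁ → threshold ε V₃ = threshold ε V₁ := fun hcard => by
    rw [threshold, hcard, ← threshold]
  obtain ⟨n, rfl⟩ : ∃ n, T = 2 * threshold ε V₁ + n := Nat.exists_eq_add_of_le (by omega)
  have hbox := h.everyBox_centred₃ (n₃ := n) le_rfl h.threshold_two_le (by omega)
    (.inl (le_threshold ε V₁))
  exact h.hasTiling_add K hbox.hasTiling_one (by omega) (by omega) (by omega) (by omega) (by omega)
    (by omega) (by omega)

lemma card_two_lt (h : Admissible H ε V₁ V₂ V₃) (hT : #V₁ + #V₂ + #V₃ = T + 8 * K)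
    (hs : 3 * (ε * #V₁) < T) (hK : 0 < K) (hV₁ : #V₁ ≤ 3 * K + threshold ε V₁)
    (hT₁ : T + 1 = 3 * threshold ε V₁) (h₃ : threshold ε V₃ = threshold ε V₁)
    (hk : 6 ≤ threshold ε V₁) : #V₂ < 3 * K + threshold ε V₁ := by
  by_contra! hV₂
  have h₁₂ := h.card_two_le
  have hlt := threshold_lt_add_one h.eps_pos.le (U := V₃)
  rw [h₃] at hlt
  generalize threshold ε V₁ = k at *
  have hT' : (T + 1 : ℝ) = 3 * k := by exact_mod_cast hT₁
  have c₁ : (#V₁ : ℝ) = 3 * K + k := by exact_mod_cast (by omega : #V₁ = 3 * K + k)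
  have c₃ : (#V₃ : ℝ) + 1 = 2 * K + k := by exact_mod_cast (by omega : #V₃ + 1 = 2 * K + k)
  have hK' : (1 : ℝ) ≤ K := by exact_mod_cast hK
  have hk' : (6 : ℝ) ≤ k := by exact_mod_cast hk
  have hcross : (k - 1 : ℝ) * #V₁ ≤ (k - 1 / 3) * #V₃ :=
    calc (k - 1 : ℝ) * #V₁ ≤ ε * #V₃ * #V₁ := by gcongr; linarith
      _ = ε * #V₁ * #V₃ := by ring
      _ ≤ (k - 1 / 3) * #V₃ := by gcongr; linarith
  rw [c₁, eq_sub_of_add_eq c₃] at hcross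
  nlinarith [mul_nonneg (sub_nonneg.2 hk') (sub_nonneg.2 hK')]

lemma hasTiling_of_add_one_eq (h : Admissible H ε V₁ V₂ V₃) (hT : #V₁ + #V₂ + #V₃ = T + 8 * K)
    (hs : 3 * (ε * #V₁) < T) (hK : 0 < K) (hV₁ : #V₁ ≤ 3 * K + threshold ε V₁)
    (hT₁ : T + 1 = 3 * threshold ε V₁) (h₃ : threshold ε V₃ = threshold ε V₁) :
    HasTiling H (1 + K) V₁ V₂ V₃ := by
  have h₁₂ := h.card_two_le
  have h₂₃ := h.card_three_le
  have hT' : (T + 1 : ℝ) = 3 * threshold ε V₁ := by exact_mod_cast hT₁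
  have hk := h.six_le_threshold (by linarith) (by omega)
  have hV₂ := h.card_two_lt hT hs hK hV₁ hT₁ h₃ hk
  have he₀ := h.lt_mul_threshold_pow hs zero_le_one hT'
  obtain ⟨K, rfl⟩ := Nat.exists_eq_add_of_le hK
  have hbox : EveryBox (HasTiling H 2) V₁ V₂ V₃ (threshold ε V₁ + 3) (threshold ε V₁ + 2)
      (threshold ε V₁ + 2) :=
    everyBox_hasTiling_of_card_eq fun A hA B hB C hC cA cB cC =>
      ((h.denseBoxes.mono hA hB hC).swap₁₂.hasTiling_two_of_card_add_three hk (by linarith)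
        cB cA cC).swap₁₂
  rw [← add_assoc]
  exact h.hasTiling_add K hbox (by omega) (by omega) (by omega) (by omega) (by omega) (by omega)
    (by omega)

lemma card_one_ne (h : Admissible H ε V₁ V₂ V₃) (hT : #V₁ + #V₂ + #V₃ = T + 8 * K)
    (hs : 3 * (ε * #V₁) < T) (hT₂ : T + 2 = 3 * threshold ε V₁)
    (h₂ : threshold ε V₂ = threshold ε V₁) (h₃ : threshold ε V₁ ≤ threshold ε V₃ + 1) :
    #V₁ ≠ 3 * K + threshold ε V₁ := by
  intro hV₁
  have hlt₂ := threshold_lt_add_one h.eps_pos.le (U := V₂)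
  have hlt₃ := threshold_lt_add_one h.eps_pos.le (U := V₃)
  obtain ⟨p, hp⟩ := Nat.exists_eq_add_of_le h.balanced
  have hpk : p + 6 = threshold ε V₁ := by omega
  have hεp : ε * p ≤ p := mul_le_of_le_one_left (Nat.cast_nonneg p) (h.eps_lt_one hT hs).le
  rify at hp hpk hT₂ h₂ h₃
  have hsum : 3 * (ε * #V₂ + ε * #V₃) = 5 * (ε * #V₁) + ε * p := by linear_combination ε * hp
  linarith

lemma hasTiling_of_add_two_eq (h : Admissible H ε V₁ V₂ V₃) (hT : #V₁ + #V₂ + #V₃ = T + 8 * K)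
    (hs : 3 * (ε * #V₁) < T) (hK : 0 < K) (hV₁ : #V₁ ≤ 3 * K + threshold ε V₁)
    (hT₂ : T + 2 = 3 * threshold ε V₁) (h₂ : threshold ε V₂ = threshold ε V₁)
    (h₃ : threshold ε V₁ ≤ threshold ε V₃ + 1) : HasTiling H (1 + K) V₁ V₂ V₃ := by
  have h₁₂ := h.card_two_le
  have h₂₃ := h.card_three_le
  have hT' : (T + 2 : ℝ) = 3 * threshold ε V₁ := by exact_mod_cast hT₂
  have hk := h.six_le_threshold (by linarith) (by omega)
  have hV₁' := h.card_one_ne hT hs hT₂ h₂ h₃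
  have he₀ := h.lt_mul_threshold_pow hs zero_le_two hT'
  obtain ⟨K, rfl⟩ := Nat.exists_eq_add_of_le hK
  have hbox : EveryBox (HasTiling H 2) V₁ V₂ V₃ (threshold ε V₁ + 2) (threshold ε V₁ + 2)
      (threshold ε V₁ + 2) :=
    everyBox_hasTiling_of_card_eq fun A hA B hB C hC =>
      (h.denseBoxes.mono hA hB hC).hasTiling_two_of_card_add_two hk (by linarith)
  rw [← add_assoc]
  exact h.hasTiling_add K hbox (by omega) (by omega) (by omega) (by omega) (by omega) (by omega)
    (by omega)

lemma hasTiling (h : Admissible H ε V₁ V₂ V₃) (hT : #V₁ + #V₂ + #V₃ = T + 8 * K)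
    (hs : 3 * (ε * #V₁) < T) : HasTiling H (1 + K) V₁ V₂ V₃ := by
  rcases K.eq_zero_or_pos with rfl | hK
  · exact h.hasTiling_of_card_eq hT hs
  rcases lt_or_ge (3 * K + threshold ε V₁) #V₁ with hV₁ | hV₁
  · exact h.hasTiling_of_lt_card_one hT hs hV₁
  have hkT : 3 * threshold ε V₁ ≤ T + 2 := by
    have hlt := threshold_lt_add_one h.eps_pos.le (U := V₁)
    have hlt' : (3 * threshold ε V₁ : ℝ) < T + 3 := by linarith
    exact Nat.lt_succ_iff.1 (by exact_mod_cast hlt')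
  have h₂ := h.threshold_two_le
  have h₃ := h.threshold_three_le
  by_cases h₃T : 2 * threshold ε V₁ + threshold ε V₃ ≤ T
  · exact h.hasTiling_of_two_mul_threshold_add_le hT hK hV₁ hkT h₃T
  by_cases hT₁ : T + 1 = 3 * threshold ε V₁
  · exact h.hasTiling_of_add_one_eq hT hs hK hV₁ hT₁ (by omega)
  have hT₂ : T + 2 = 3 * threshold ε V₁ := by omega
  by_cases h₂₁ : threshold ε V₂ = threshold ε V₁
  · exact h.hasTiling_of_add_two_eq hT hs hK hV₁ hT₂ h₂₁ (by omega)
  · exact h.hasTiling_of_threshold_add_threshold_lt hT hs hK hV₁ hT₂ (by omega) (by omega)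

end Admissible

end Regularity

section Transversals

variable {V : Type} [DecidableEq V] {H : Finset (Finset V)} {A B C A' B' C' e : Finset V}

/-- `e` consists of one vertex from each of `A`, `B` and `C`, stated with witnesses so that it is
monotone in the three classes. -/
def IsTransversal (A B C e : Finset V) : Prop := ∃ x ∈ A, ∃ y ∈ B, ∃ z ∈ C, {x, y, z} = e

lemma IsTransversal.mono (h : IsTransversal A B C e) (hA : A ⊆ A') (hB : B ⊆ B') (hC : C ⊆ C') :
    IsTransversal A' B' C' e :=
  let ⟨x, hx, y, hy, z, hz, he⟩ := h
  ⟨x, hA hx, y, hB hy, z, hC hz, he⟩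

lemma IsTransversal.swap₁₂ (h : IsTransversal A B C e) : IsTransversal B A C e :=
  let ⟨x, hx, y, hy, z, hz, he⟩ := h
  ⟨y, hy, x, hx, z, hz, by rw [insert_comm, he]⟩

lemma IsTransversal.rotate (h : IsTransversal A B C e) : IsTransversal B C A e :=
  let ⟨x, hx, y, hy, z, hz, he⟩ := h
  ⟨y, hy, z, hz, x, hx, by rw [← he, pair_comm z x, insert_comm]⟩

lemma IsTransversal.subset (h : IsTransversal A B C e) : e ⊆ A ∪ B ∪ C := by
  obtain ⟨x, hx, y, hy, z, hz, rfl⟩ := h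
  simp [insert_subset_iff, *]

lemma triple_inter_eq (hAB : Disjoint A B) (hAC : Disjoint A C) (hBC : Disjoint B C) {x y z : V}
    (hx : x ∈ A) (hy : y ∈ B) (hz : z ∈ C) :
    {x, y, z} ∩ A = {x} ∧ {x, y, z} ∩ B = {y} ∧ {x, y, z} ∩ C = {z} := by
  have hxB := disjoint_left.1 hAB hx
  have hxC := disjoint_left.1 hAC hx
  have hyA := disjoint_right.1 hAB hy
  have hyC := disjoint_left.1 hBC hy
  have hzA := disjoint_right.1 hAC hz
  have hzB := disjoint_right.1 hBC hz
  simp [insert_inter_of_mem, insert_inter_of_notMem, *]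

lemma IsTransversal.card_inter (h : IsTransversal A B C e) (hAB : Disjoint A B)
    (hAC : Disjoint A C) (hBC : Disjoint B C) : #(e ∩ A) = 1 ∧ #(e ∩ B) = 1 ∧ #(e ∩ C) = 1 := by
  obtain ⟨x, hx, y, hy, z, hz, rfl⟩ := h
  obtain ⟨hA, hB, hC⟩ := triple_inter_eq hAB hAC hBC hx hy hz
  simp only [hA, hB, hC, card_singleton, and_self]

lemma isTransversal_of_card_inter (he : #e = 3) (hAB : Disjoint A B) (hAC : Disjoint A C)
    (hBC : Disjoint B C) (hA : #(e ∩ A) = 1) (hB : #(e ∩ B) = 1) (hC : #(e ∩ C) = 1) :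
    IsTransversal A B C e := by
  have exists_mem : ∀ {U : Finset V}, #(e ∩ U) = 1 → ∃ u ∈ U, u ∈ e := fun h => by
    obtain ⟨u, hu⟩ := card_pos.1 (h ▸ one_pos)
    exact ⟨u, (mem_inter.1 hu).2, (mem_inter.1 hu).1⟩
  obtain ⟨x, hx, hxe⟩ := exists_mem hA
  obtain ⟨y, hy, hye⟩ := exists_mem hB
  obtain ⟨z, hz, hze⟩ := exists_mem hC
  have hcard : #{x, y, z} = 3 := card_eq_three.2 ⟨x, y, z, hAB.forall_ne_finset hx hy,
    hAC.forall_ne_finset hx hz, hBC.forall_ne_finset hy hz, rfl⟩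
  exact ⟨x, hx, y, hy, z, hz,
    eq_of_subset_of_card_le (by simp [insert_subset_iff, *]) (he.trans hcard.symm).le⟩

lemma eCross_eq_tripleCount (huniform : ∀ e ∈ H, #e = 3) (hAB : Disjoint A B)
    (hAC : Disjoint A C) (hBC : Disjoint B C) : eCross H A B C = tripleCount H A B C := by
  set f : V × V × V → Finset V := fun p => {p.1, p.2.1, p.2.2}
  set S : Finset (V × V × V) := {p ∈ A ×ˢ B ×ˢ C | f p ∈ H}
  have hS : #S = tripleCount H A B C := by
    rw [tripleCount_eq_sum, card_filter, sum_product]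
    exact sum_congr rfl fun x _ => sum_product _ _ _
  have hinj : Set.InjOn f S := by
    rintro ⟨x, y, z⟩ hp ⟨x', y', z'⟩ hp' heq
    change ({x, y, z} : Finset V) = {x', y', z'} at heq
    simp only [S, mem_coe, mem_filter, mem_product] at hp hp'
    have h := triple_inter_eq hAB hAC hBC hp.1.1 hp.1.2.1 hp.1.2.2
    have h' := triple_inter_eq hAB hAC hBC hp'.1.1 hp'.1.2.1 hp'.1.2.2
    simp only [heq, h'.1, h'.2.1, h'.2.2, singleton_inj] at h
    rw [h.1, h.2.1, h.2.2]
  rw [eCross, ← hS, ← card_image_of_injOn hinj]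
  congr 1
  ext e
  simp only [mem_filter, mem_image, S, f, mem_product, Prod.exists]
  constructor
  · rintro ⟨he, hA, hB, hC⟩
    obtain ⟨x, hx, y, hy, z, hz, rfl⟩ :=
      isTransversal_of_card_inter (huniform e he) hAB hAC hBC hA hB hC
    exact ⟨x, y, z, ⟨⟨hx, hy, hz⟩, he⟩, rfl⟩
  · rintro ⟨x, y, z, ⟨⟨hx, hy, hz⟩, he⟩, rfl⟩
    exact ⟨he, IsTransversal.card_inter ⟨x, hx, y, hy, z, hz, rfl⟩ hAB hAC hBC⟩

lemma RegTriple.lowerRegular {ε d : ℝ} (hreg : RegTriple H ε d A B C) (hd : 2 * ε ≤ d)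
    (huniform : ∀ e ∈ H, #e = 3) (hAB : Disjoint A B) (hAC : Disjoint A C) (hBC : Disjoint B C) :
    LowerRegular H ε A B C := by
  intro X hX Y hY Z hZ cX cY cZ
  have hdensity := (abs_le.1 (hreg X Y Z hX hY hZ cX cY cZ)).1
  rw [triDensity, eCross_eq_tripleCount huniform (hAB.mono hX hY) (hAC.mono hX hZ)
    (hBC.mono hY hZ)] at hdensity
  rcases (by positivity : (0 : ℝ) ≤ #X * #Y * #Z).eq_or_lt with hzero | hpos
  · rw [← hzero, mul_zero]
    positivity
  · rw [← le_div_iff₀ hpos]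
    linarith

end Transversals

section Conversion

variable {V : Type} [DecidableEq V] {H : Finset (Finset V)} {A B C A' B' C' : Finset V}

/-- `g` describes a copy of `M` in the triple `(A, B, C)`. -/
def IsCopyIn (H : Finset (Finset V)) (A B C : Finset V) (g : Fin 8 → V) : Prop :=
  IsMCopy H g ∧ ∀ e ∈ MCopyEdges g, IsTransversal A B C e

lemma IsCopyIn.mono {g : Fin 8 → V} (h : IsCopyIn H A B C g) (hA : A ⊆ A') (hB : B ⊆ B')
    (hC : C ⊆ C') : IsCopyIn H A' B' C' g :=
  ⟨h.1, fun e he => (h.2 e he).mono hA hB hC⟩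

lemma exists_mem_mCopyEdges (g : Fin 8 → V) (a : Fin 8) : ∃ e ∈ MCopyEdges g, g a ∈ e := by
  fin_cases a <;> simp [MCopyEdges]

lemma IsCopyIn.mem {g : Fin 8 → V} (h : IsCopyIn H A B C g) (a : Fin 8) : g a ∈ A ∪ B ∪ C :=
  let ⟨e, he, ha⟩ := exists_mem_mCopyEdges g a
  (h.2 e he).subset ha

lemma HasCentredCopy.exists_isCopyIn (h : HasCentredCopy H A B C) (hAB : Disjoint A B)
    (hAC : Disjoint A C) (hBC : Disjoint B C) : ∃ g, IsCopyIn H A B C g := by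
  obtain ⟨x, hx, x', hx', hne, c, hc, hc', a, ha, b, hb, hca, hcb, hab⟩ := h
  obtain ⟨hc₁, hc₂, hcx⟩ := mem_link.1 hc
  obtain ⟨ha₁, ha₂, hax⟩ := mem_link.1 ha
  obtain ⟨hb₁, hb₂, hbx'⟩ := mem_link.1 hb
  have hcx' := (mem_link.1 hc').2.2
  have neAB : ∀ {u v}, u ∈ A → v ∈ B → u ≠ v := fun hu hv => hAB.forall_ne_finset hu hv
  have neAC : ∀ {u v}, u ∈ A → v ∈ C → u ≠ v := fun hu hv => hAC.forall_ne_finset hu hv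
  have neBC : ∀ {u v}, u ∈ B → v ∈ C → u ≠ v := fun hu hv => hBC.forall_ne_finset hu hv
  have rotate : ∀ u v w : V, ({u, v, w} : Finset V) = {w, u, v} := fun u v w => by
    rw [insert_comm w, pair_comm w]
  refine ⟨![a.1, a.2, x, c.1, c.2, x', b.1, b.2], ⟨?_, ?_, hcx, ?_, hbx'⟩, fun e he => ?_⟩
  · rw [← List.nodup_ofFn]
    simp [List.ofFn_succ, hca.1.symm, hca.2.symm, hcb.1, hcb.2, hab.1, hab.2, (neAB _ _).symm,
      (neAC _ _).symm, (neBC _ _).symm, *]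
  · exact (rotate _ _ _).symm ▸ hax
  · exact (rotate _ _ _).symm ▸ hcx'
  · have he' : e = {a.1, a.2, x} ∨ e = {x, c.1, c.2} ∨ e = {c.1, c.2, x'} ∨ e = {x', b.1, b.2} := by
      simpa [MCopyEdges] using he
    rcases he' with rfl | rfl | rfl | rfl
    · exact ⟨x, hx, a.1, ha₁, a.2, ha₂, (rotate _ _ _).symm⟩
    · exact ⟨x, hx, c.1, hc₁, c.2, hc₂, rfl⟩
    · exact ⟨x', hx', c.1, hc₁, c.2, hc₂, (rotate _ _ _).symm⟩
    · exact ⟨x', hx', b.1, hb₁, b.2, hb₂, rfl⟩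

lemma HasCopy.exists_isCopyIn (h : HasCopy H A B C) (hAB : Disjoint A B) (hAC : Disjoint A C)
    (hBC : Disjoint B C) : ∃ g, IsCopyIn H A B C g := by
  rcases h with h | h | h
  · exact h.exists_isCopyIn hAB hAC hBC
  · obtain ⟨g, hg, he⟩ := h.exists_isCopyIn hAB.symm hBC hAC
    exact ⟨g, hg, fun e h => (he e h).swap₁₂⟩
  · obtain ⟨g, hg, he⟩ := h.exists_isCopyIn hAC.symm hBC.symm hAB
    exact ⟨g, hg, fun e h => (he e h).rotate⟩

lemma disjoint_union_sdiff {X Y Z : Finset V} (hX : X ⊆ A) (hY : Y ⊆ B) (hZ : Z ⊆ C)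
    (hAB : Disjoint A B) (hAC : Disjoint A C) (hBC : Disjoint B C) :
    Disjoint (X ∪ Y ∪ Z) (A \ X ∪ B \ Y ∪ C \ Z) := by
  simp only [disjoint_union_left, disjoint_union_right]
  exact ⟨⟨⟨⟨disjoint_sdiff, hAB.symm.mono hY sdiff_subset⟩, hAC.symm.mono hZ sdiff_subset⟩,
    ⟨hAB.mono hX sdiff_subset, disjoint_sdiff⟩, hBC.symm.mono hZ sdiff_subset⟩,
    ⟨hAC.mono hX sdiff_subset, hBC.mono hY sdiff_subset⟩, disjoint_sdiff⟩

lemma HasTiling.exists_isCopyIn {q : ℕ} (h : HasTiling H q A B C) (hAB : Disjoint A B)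
    (hAC : Disjoint A C) (hBC : Disjoint B C) :
    ∃ gs : Fin q → Fin 8 → V, (∀ i, IsCopyIn H A B C (gs i)) ∧
      ∀ i j, i ≠ j → ∀ a b, gs i a ≠ gs j b := by
  induction h with
  | zero => exact ⟨fun i => i.elim0, fun i => i.elim0, fun i => i.elim0⟩
  | @succ q A B C X Y Z hX hY hZ hcopy _ ih =>
    obtain ⟨g, hg⟩ := hcopy.exists_isCopyIn (hAB.mono hX hY) (hAC.mono hX hZ) (hBC.mono hY hZ)
    obtain ⟨gs, hgs, hne⟩ := ih (hAB.mono sdiff_subset sdiff_subset)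
      (hAC.mono sdiff_subset sdiff_subset) (hBC.mono sdiff_subset sdiff_subset)
    have hne' : ∀ j a b, g a ≠ gs j b := fun j a b =>
      (disjoint_union_sdiff hX hY hZ hAB hAC hBC).forall_ne_finset (hg.mem a) ((hgs j).mem b)
    refine ⟨Fin.cons g gs, Fin.cases (hg.mono hX hY hZ) fun i =>
      (hgs i).mono sdiff_subset sdiff_subset sdiff_subset, ?_⟩
    refine Fin.cases (Fin.cases (fun h => (h rfl).elim) fun j _ => hne' j) fun i =>
      Fin.cases (fun _ a b => (hne' i b a).symm) fun j hij => hne i j fun h => hij (h ▸ rfl)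

lemma card_biUnion_image {q : ℕ} {gs : Fin q → Fin 8 → V} (hinj : ∀ i, Function.Injective (gs i))
    (hne : ∀ i j, i ≠ j → ∀ a b, gs i a ≠ gs j b) :
    #(univ.biUnion fun i => univ.image (gs i)) = q * 8 := by
  rw [card_biUnion fun i _ j _ hij => ?_]
  · simp [card_image_of_injective _ (hinj _)]
  · simpa [disjoint_left] using fun a b => (hne i j hij a b).symm

lemma HasTiling.exists_isMCopy {q : ℕ} (h : HasTiling H q A B C) (hAB : Disjoint A B)
    (hAC : Disjoint A C) (hBC : Disjoint B C) :
    ∃ gs : Fin q → Fin 8 → V,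
      (∀ i, IsMCopy H (gs i)) ∧
      (∀ i j, i ≠ j → ∀ a b, gs i a ≠ gs j b) ∧
      (∀ i a, gs i a ∈ A ∪ B ∪ C) ∧
      (∀ i, ∀ e ∈ MCopyEdges (gs i), #(e ∩ A) = 1 ∧ #(e ∩ B) = 1 ∧ #(e ∩ C) = 1) ∧
      #((A ∪ B ∪ C) \ univ.biUnion fun i => univ.image (gs i)) + q * 8 = #A + #B + #C := by
  obtain ⟨gs, hgs, hne⟩ := h.exists_isCopyIn hAB hAC hBC
  have hsub : (univ.biUnion fun i => univ.image (gs i)) ⊆ A ∪ B ∪ C :=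
    biUnion_subset.2 fun i _ => image_subset_iff.2 fun a _ => (hgs i).mem a
  refine ⟨gs, fun i => (hgs i).1, hne, fun i => (hgs i).mem,
    fun i e he => ((hgs i).2 e he).card_inter hAB hAC hBC, ?_⟩
  rw [← card_biUnion_image (fun i => (hgs i).1.1) hne, card_sdiff_add_card_eq_card hsub,
    card_union_of_disjoint (disjoint_union_left.2 ⟨hAC, hBC⟩), card_union_of_disjoint hAB]

end Conversion

lemma Admissible.exists_hasTiling {V : Type*} [DecidableEq V] {H : Finset (Finset V)} {ε : ℝ}
    {V₁ V₂ V₃ : Finset V} (h : Admissible H ε V₁ V₂ V₃) :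
    ∃ q, HasTiling H q V₁ V₂ V₃ ∧ (#V₁ + #V₂ + #V₃ : ℝ) ≤ 3 * (ε * #V₁) + q * 8 := by
  rcases le_or_gt (#V₁ + #V₂ + #V₃ : ℝ) (3 * (ε * #V₁)) with hsmall | hlarge
  · exact ⟨0, .zero _ _ _, by simpa using hsmall⟩
  set t := (#V₁ + #V₂ + #V₃ - 3 * (ε * #V₁) : ℝ) / 8 with ht_def
  have ht : 0 < t := by linarith
  obtain ⟨K, hK⟩ := Nat.exists_eq_add_of_le (Nat.ceil_pos.2 ht : 1 ≤ ⌈t⌉₊)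
  have hceil : t ≤ 1 + K := by exact_mod_cast hK ▸ Nat.le_ceil t
  have hlt : (1 + K : ℝ) < t + 1 := by exact_mod_cast hK ▸ Nat.ceil_lt_add_one ht.le
  have hs := h.size_pos
  have hle : 8 * K ≤ #V₁ + #V₂ + #V₃ := by
    rw [← Nat.cast_le (α := ℝ)]
    push_cast
    linarith
  obtain ⟨T, hT⟩ := Nat.exists_eq_add_of_le' hle
  refine ⟨1 + K, h.hasTiling hT ?_, by push_cast; linarith⟩
  rify at hT
  linarith

theorem M_tiling_of_regular_triple_general {V : Type} [DecidableEq V] {H : Finset (Finset V)}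
    {ε : ℝ} (hε : 0 < ε) {V₁ V₂ V₃ : Finset V}
    (h₁₂ : Disjoint V₁ V₂) (h₁₃ : Disjoint V₁ V₃) (h₂₃ : Disjoint V₂ V₃)
    (hreg : LowerRegular H ε V₁ V₂ V₃)
    (hcard₂ : #V₂ ≤ #V₁) (hcard₃ : #V₃ ≤ #V₂) (hbal : 5 * #V₁ ≤ 3 * (#V₂ + #V₃))
    (hlt : 7 < 2 * ε ^ 2 * #V₁) :
    ∃ (q : ℕ) (gs : Fin q → Fin 8 → V),
      (∀ i, IsMCopy H (gs i)) ∧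
      (∀ i j, i ≠ j → ∀ a b, gs i a ≠ gs j b) ∧
      (∀ i a, gs i a ∈ V₁ ∪ V₂ ∪ V₃) ∧
      (∀ i, ∀ e ∈ MCopyEdges (gs i), #(e ∩ V₁) = 1 ∧ #(e ∩ V₂) = 1 ∧ #(e ∩ V₃) = 1) ∧
      (#((V₁ ∪ V₂ ∪ V₃) \ univ.biUnion fun i => univ.image (gs i)) : ℝ) ≤ 3 * ε * #V₁ := by
  obtain ⟨q, htiling, hq⟩ :=
    Admissible.exists_hasTiling ⟨hε, hreg, hcard₂, hcard₃, hbal, hlt⟩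
  obtain ⟨gs, hcopy, hne, hmem, hedges, hrest⟩ := htiling.exists_isMCopy h₁₂ h₁₃ h₂₃
  refine ⟨q, gs, hcopy, hne, hmem, hedges, ?_⟩
  rify at hrest
  linarith

theorem M_tiling_of_regular_triple (V : Type) [Fintype V] [DecidableEq V]
    (H : Finset (Finset V)) (huniform : ∀ e ∈ H, e.card = 3)
    (ε d : ℝ) (hε : 0 < ε) (hd : 2 * ε ≤ d)
    (V1 V2 V3 : Finset V)
    (hdisj12 : Disjoint V1 V2) (hdisj13 : Disjoint V1 V3) (hdisj23 : Disjoint V2 V3)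
    (hreg : RegTriple H ε d V1 V2 V3)
    (hsz1 : V2.card ≤ V1.card) (hsz2 : V3.card ≤ V2.card)
    (hbal : 5 * V1.card ≤ 3 * (V2.card + V3.card))
    (hm : 7 < 2 * ε ^ 2 * (V1.card : ℝ)) :
    ∃ (q : ℕ) (gs : Fin q → Fin 8 → V),
      (∀ i, IsMCopy H (gs i)) ∧
      (∀ i j, i ≠ j → ∀ a b, gs i a ≠ gs j b) ∧
      (∀ i a, gs i a ∈ V1 ∪ V2 ∪ V3) ∧
      (∀ i, ∀ e ∈ MCopyEdges (gs i),
        (e ∩ V1).card = 1 ∧ (e ∩ V2).card = 1 ∧ (e ∩ V3).card = 1) ∧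
      ((((V1 ∪ V2 ∪ V3) \ Finset.univ.biUnion fun i => Finset.univ.image (gs i)).card : ℝ)
        ≤ 3 * ε * (V1.card : ℝ)) := by
  exact M_tiling_of_regular_triple_general hε hdisj12 hdisj13 hdisj23
    (hreg.lowerRegular hd huniform hdisj12 hdisj13 hdisj23) hsz1 hsz2 hbal hm
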